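/- arXiv:2502.08394 — 2 statements merged into one kernel-verified Lean document; each statement's English description precedes it below -/
import Mathlib

section
/- RSW estimate for critical Bernoulli percolation on ℤ²: there exists a constant c > 0 such that for all integers n ≥ 1, ℙ_{1/2}[the rectangle [−n,n] × [0,n] contains an open crossing between its left and right sides] ≥ c, where such a crossing is a path of open edges whose vertices all lie in [−n,n] × [0,n], joining a vertex with first coordinate −n to a vertex with first coordinate n. -/
open MeasureTheory

namespace Perc

/-- Vertices of `ℤ^d`. -/
abbrev Vertex (d : ℕ) := Fin d → ℤ

/-- Nearest-neighbour adjacency in `ℤ^d`: `‖x − y‖₁ = 1`. -/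
def adj {d : ℕ} (x y : Vertex d) : Prop :=
  (∑ i, (x i - y i).natAbs) = 1

/-- The unordered pair `e` is a nearest-neighbour edge of `ℤ^d`. -/
def IsEdge {d : ℕ} (e : Sym2 (Vertex d)) : Prop :=
  ∃ x y : Vertex d, adj x y ∧ e = s(x, y)

/-- The set `E` of nearest-neighbour edges of `ℤ^d`. -/
abbrev Edge (d : ℕ) := {e : Sym2 (Vertex d) // IsEdge e}

/-- Percolation configurations `ω ∈ {0,1}^E`. -/
abbrev Config (d : ℕ) := Edge d → Bool

/-- One step along an open edge of `ω`. -/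
def step {d : ℕ} (ω : Config d) (x y : Vertex d) : Prop :=
  ∃ h : adj x y, ω ⟨s(x, y), x, y, h, rfl⟩ = true

/-- `x` and `y` are joined by a path of open edges. -/
def Conn {d : ℕ} (ω : Config d) : Vertex d → Vertex d → Prop :=
  Relation.ReflTransGen (step ω)

/-- The open cluster of `x` in `ω`. -/
def cluster {d : ℕ} (ω : Config d) (x : Vertex d) : Set (Vertex d) :=
  {y | Conn ω x y}

/-- The box `Λ_n = {−n, …, n}^d`. -/
def box (d n : ℕ) : Set (Vertex d) := {x | ∀ i, |x i| ≤ (n : ℤ)}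

/-- `∂Λ_n`: vertices of `Λ_n` having a nearest neighbour outside `Λ_n`. -/
def boxBoundary (d n : ℕ) : Set (Vertex d) :=
  {x | x ∈ box d n ∧ ∃ y, adj x y ∧ y ∉ box d n}

/-- The origin of `ℤ^d`. -/
def origin (d : ℕ) : Vertex d := fun _ => 0

/-- The event `{0 ↔ ∂Λ_n}`. -/
def ZeroToBoundary (d n : ℕ) : Set (Config d) :=
  {ω | ∃ y ∈ boxBoundary d n, Conn ω (origin d) y}

/-- The event `{0 ↔ ∞}` that the open cluster of the origin is infinite. -/
def ZeroToInfinity (d : ℕ) : Set (Config d) :=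
  {ω | (cluster ω (origin d)).Infinite}

/-- `μ` is the law of i.i.d. Bernoulli(p) edge variables: it is a probability measure on
`{0,1}^E` under which every finite cylinder has the corresponding product probability. -/
def IsBernoulli (d : ℕ) (p : ℝ) (μ : Measure (Config d)) : Prop :=
  IsProbabilityMeasure μ ∧
    ∀ (s : Finset (Edge d)) (f : Edge d → Bool),
      μ {ω : Config d | ∀ e ∈ s, ω e = f e} =
        ENNReal.ofReal (∏ e ∈ s, if f e then p else 1 - p)

/-- `x` and `y` are joined by a path of open edges all of whose vertices lie in `A`. -/
def ConnWithin (ω : Config 2) (A : Set (Vertex 2)) (x y : Vertex 2) : Prop :=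
  x ∈ A ∧ Relation.ReflTransGen (fun a b => step ω a b ∧ a ∈ A ∧ b ∈ A) x y

/-- The rectangle `[−n,n] × [0,n]` of `ℤ²`. -/
def rect (n : ℕ) : Set (Vertex 2) :=
  {x | -(n : ℤ) ≤ x 0 ∧ x 0 ≤ (n : ℤ) ∧ 0 ≤ x 1 ∧ x 1 ≤ (n : ℤ)}

/-- The event that `[−n,n] × [0,n]` contains an open left-right crossing: a path of open
edges with all vertices in the rectangle, joining a vertex with first coordinate `−n` to a
vertex with first coordinate `n`. -/
def HorizontalCrossing (n : ℕ) : Set (Config 2) :=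
  {ω | ∃ x y : Vertex 2, x 0 = -(n : ℤ) ∧ y 0 = (n : ℤ) ∧ ConnWithin ω (rect n) x y}

/-! ### Lattice paths -/

abbrev Z2 := ℤ × ℤ

def nb (a b : Z2) : Prop :=
  (a.1 = b.1 ∧ (a.2 = b.2 + 1 ∨ b.2 = a.2 + 1)) ∨
  (a.2 = b.2 ∧ (a.1 = b.1 + 1 ∨ b.1 = a.1 + 1))

lemma nb_mk {a b c d : ℤ} (h : (a = c ∧ (b = d + 1 ∨ d = b + 1)) ∨
    (b = d ∧ (a = c + 1 ∨ c = a + 1))) : nb (a, b) (c, d) := h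

lemma nb.symm {a b : Z2} (h : nb a b) : nb b a := by
  unfold nb at *; omega

/-- `p` and `q` are joined by a nearest-neighbour path in `s`. -/
def J (s : Set Z2) (p q : Z2) : Prop :=
  p ∈ s ∧ Relation.ReflTransGen (fun a b => nb a b ∧ b ∈ s) p q

lemma J.refl {s : Set Z2} {p : Z2} (h : p ∈ s) : J s p p := ⟨h, .refl⟩

lemma J.tail {s : Set Z2} {p a b : Z2} (h : J s p a) (hn : nb a b) (hb : b ∈ s) : J s p b :=
  ⟨h.1, h.2.tail ⟨hn, hb⟩⟩

lemma J.ind {s : Set Z2} {p q : Z2} (h : J s p q) (M : Z2 → Prop) (h0 : M p)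
    (hs : ∀ a b, J s p a → M a → nb a b → b ∈ s → M b) : M q := by
  obtain ⟨hp, h⟩ := h
  induction h with
  | refl => exact h0
  | tail h1 h2 ih => exact hs _ _ ⟨hp, h1⟩ ih h2.1 h2.2

lemma J.mem_right {s : Set Z2} {p q : Z2} (h : J s p q) : q ∈ s :=
  h.ind (fun q => q ∈ s) h.1 (fun _ _ _ _ _ hb => hb)

lemma J.trans {s : Set Z2} {p q r : Z2} (h : J s p q) (h' : J s q r) : J s p r :=
  ⟨h.1, h.2.trans h'.2⟩

lemma J.symm {s : Set Z2} {p q : Z2} (h : J s p q) : J s q p := by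
  refine h.ind (fun q => J s q p) (J.refl h.1) ?_
  intro a b ha hM hn hb
  exact (J.tail (J.refl hb) hn.symm ha.mem_right).trans hM

lemma J.map {s t : Set Z2} {p q : Z2} (h : J s p q) (f : Z2 → Z2)
    (hf : ∀ a b, nb a b → nb (f a) (f b)) (hst : ∀ a ∈ s, f a ∈ t) : J t (f p) (f q) :=
  h.ind (fun q => J t (f p) (f q)) (J.refl (hst _ h.1))
    (fun a b _ hM hn hb => hM.tail (hf _ _ hn) (hst _ hb))

lemma J.mono {s t : Set Z2} {p q : Z2} (h : J s p q) (hst : s ⊆ t) : J t p q :=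
  h.map id (fun _ _ h => h) hst

lemma J.cluster {s : Set Z2} {p q : Z2} (h : J s p q) : J {a | J s p a} p q :=
  h.ind (fun q => J {a | J s p a} p q) (J.refl (J.refl h.1))
    (fun a b ha hM hn hb => hM.tail hn (ha.tail hn hb))

/-- either the path avoids `P` or there is a first hitting point -/
lemma J.firstHit {s : Set Z2} {p q : Z2} (h : J s p q) (P : Set Z2) (hp : p ∉ P) :
    J (s \ P) p q ∨ ∃ w' w, J (s \ P) p w' ∧ nb w' w ∧ w ∈ P ∧ w ∈ s := by
  refine h.ind (fun q => J (s \ P) p q ∨ ∃ w' w, J (s \ P) p w' ∧ nb w' w ∧ w ∈ P ∧ w ∈ s)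
    (Or.inl (J.refl ⟨h.1, hp⟩)) ?_
  rintro a b ha (hM | hM) hn hb
  · by_cases hbP : b ∈ P
    · exact Or.inr ⟨a, b, hM, hn, hbP, hb⟩
    · exact Or.inl (hM.tail hn ⟨hb, hbP⟩)
  · exact Or.inr hM

/-! ### The side function and separation -/

def ray (p v : Z2) : ℤ := if p.1 = v.1 ∧ p.2 < v.2 then 1 else 0

def stp (a b v : Z2) : ℤ :=
  if a.2 < v.2 then
    (if a.1 = v.1 ∧ b.1 = v.1 + 1 then 1 else if b.1 = v.1 ∧ a.1 = v.1 + 1 then -1 else 0)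
  else 0

lemma J.side {s : Set Z2} {p q : Z2} (h : J s p q) : ∃ N : Z2 → ℤ,
    (∀ x y : ℤ, (x, y) ∉ s → (x, y + 1) ∉ s → N (x, y) = N (x, y + 1)) ∧
    (∀ x y : ℤ, (x, y) ∉ s → (x + 1, y) ∉ s →
      N (x, y) - N (x + 1, y) = ray q (x + 1, y) - ray p (x + 1, y)) ∧
    (∀ v, v ∉ s → (∀ a ∈ s, a.2 ≤ v.2) →
      N v = (if v.1 < q.1 then 1 else 0) - (if v.1 < p.1 then 1 else 0)) ∧
    (∀ v, (∀ a ∈ s, v.2 ≤ a.2) → N v = 0) := by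
  refine h.ind (fun q => ∃ N : Z2 → ℤ,
    (∀ x y : ℤ, (x, y) ∉ s → (x, y + 1) ∉ s → N (x, y) = N (x, y + 1)) ∧
    (∀ x y : ℤ, (x, y) ∉ s → (x + 1, y) ∉ s →
      N (x, y) - N (x + 1, y) = ray q (x + 1, y) - ray p (x + 1, y)) ∧
    (∀ v, v ∉ s → (∀ a ∈ s, a.2 ≤ v.2) →
      N v = (if v.1 < q.1 then 1 else 0) - (if v.1 < p.1 then 1 else 0)) ∧
    (∀ v, (∀ a ∈ s, v.2 ≤ a.2) → N v = 0)) ?_ ?_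
  · exact ⟨fun _ => 0, by simp, by simp, by simp, by simp⟩
  · rintro ⟨a1, a2⟩ ⟨b1, b2⟩ ha ⟨N, h1, h2, h3, h4⟩ hn hb
    have has := ha.mem_right
    have key : ∀ x y : ℤ, (x, y) ∉ s → ((a1 ≠ x ∨ a2 ≠ y) ∧ (b1 ≠ x ∨ b2 ≠ y)) := by
      intro x y hxy
      constructor
      · by_contra hc
        apply hxy
        have e1 : a1 = x := by omega
        have e2 : a2 = y := by omega
        rw [← e1, ← e2]; exact has
      · by_contra hc
        apply hxy
        have e1 : b1 = x := by omega
        have e2 : b2 = y := by omega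
        rw [← e1, ← e2]; exact hb
    refine ⟨fun v => N v + stp (a1, a2) (b1, b2) v, ?_, ?_, ?_, ?_⟩
    · intro x y hx hy
      have := h1 x y hx hy
      have k1 := key _ _ hx
      have k2 := key _ _ hy
      simp only [stp, nb] at *
      split_ifs <;> omega
    · intro x y hx hy
      have := h2 x y hx hy
      have k1 := key _ _ hx
      have k2 := key _ _ hy
      simp only [stp, nb, ray] at *
      split_ifs at * <;> omega
    · rintro ⟨x, y⟩ hv hall
      have := h3 (x, y) hv hall
      have k1 := key _ _ hv
      have k2 := hall _ has
      have k3 := hall _ hb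
      simp only [stp, nb] at *
      split_ifs at * <;> omega
    · rintro ⟨x, y⟩ hall
      have := h4 (x, y) hall
      have k2 := hall _ has
      have k3 := hall _ hb
      simp only [stp, nb] at *
      split_ifs at * <;> omega

lemma sep {s t : Set Z2} {p q u v : Z2} {x0 x1 : ℤ}
    (hs : ∀ a ∈ s, x0 ≤ a.1 ∧ a.1 ≤ x1) (hpq : J s p q) (hp : p.1 = x0) (hq : q.1 = x1)
    (ht : ∀ a ∈ t, x0 ≤ a.1 ∧ a.1 ≤ x1) (huv : J t u v)
    (hu : ∀ a ∈ s, u.2 ≤ a.2) (hv : ∀ a ∈ s, a.2 ≤ v.2) : ∃ a, a ∈ s ∧ a ∈ t := by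
  by_contra hcon
  have hd : ∀ a ∈ t, a ∉ s := fun a h h' => hcon ⟨a, h', h⟩
  set s' : Set Z2 := s ∪ {(q.1 + 1, q.2)} with hs'
  have hd' : ∀ a ∈ t, a ∉ s' := by
    rintro a h (h' | h')
    · exact hd a h h'
    · have := ht a h
      rw [Set.mem_singleton_iff] at h'
      rw [h'] at this
      simp only at this
      omega
  have hpq' : J s' p (q.1 + 1, q.2) := by
    refine (hpq.mono Set.subset_union_left).tail ?_ (Or.inr rfl)
    simp [nb]
  obtain ⟨N, h1, h2, h3, h4⟩ := hpq'.side
  have hconst : N v = N u := by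
    refine huv.ind (fun v => N v = N u) rfl ?_
    rintro ⟨a1, a2⟩ ⟨b1, b2⟩ ha hM hn hb
    rw [← hM]
    have hat := ha.mem_right
    have k1 := ht _ hat
    have k2 := ht _ hb
    have d1 := hd' _ hat
    have d2 := hd' _ hb
    simp only at k1 k2
    rcases hn with ⟨e, e' | e'⟩ | ⟨e, e' | e'⟩ <;> simp only at e e' <;> subst e <;> subst e'
    · exact h1 _ _ d2 d1
    · exact (h1 _ _ d1 d2).symm
    · have := h2 _ _ d2 d1
      simp only [ray] at this
      split_ifs at this <;> omega
    · have := h2 _ _ d1 d2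
      simp only [ray] at this
      split_ifs at this <;> omega
  have e1 : N u = 0 := by
    apply h4
    rintro a (ha | ha)
    · exact hu a ha
    · rw [Set.mem_singleton_iff] at ha
      rw [ha]; exact hu q hpq.mem_right
  have e2 : N v = 1 := by
    rw [h3 v (hd' _ huv.mem_right)]
    · have := ht _ huv.mem_right
      rw [if_pos (by simp only; omega), if_neg (by omega)]; rfl
    · rintro a (ha | ha)
      · exact hv a ha
      · rw [Set.mem_singleton_iff] at ha
        rw [ha]; exact hv q hpq.mem_right
  omega

/-- crossing paths are joined -/
lemma glue {s t : Set Z2} {p q u v : Z2} {x0 x1 : ℤ}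
    (hs : ∀ a ∈ s, x0 ≤ a.1 ∧ a.1 ≤ x1) (hpq : J s p q) (hp : p.1 = x0) (hq : q.1 = x1)
    (ht : ∀ a ∈ t, x0 ≤ a.1 ∧ a.1 ≤ x1) (huv : J t u v)
    (hu : ∀ a ∈ s, u.2 ≤ a.2) (hv : ∀ a ∈ s, a.2 ≤ v.2) : J (s ∪ t) p u := by
  have hs' : ∀ a, J s p a → a ∈ s := fun a h => h.mem_right
  have ht' : ∀ a, J t u a → a ∈ t := fun a h => h.mem_right
  obtain ⟨a, h1, h2⟩ := sep (s := {a | J s p a}) (t := {a | J t u a})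
    (fun a h => hs a (hs' a h)) hpq.cluster hp hq (fun a h => ht a (ht' a h)) huv.cluster
    (fun a h => hu a (hs' a h)) (fun a h => hv a (hs' a h))
  exact (J.mono h1 Set.subset_union_left).trans (J.mono h2 Set.subset_union_right).symm

/-! ### The Hex lemma -/

def rc (x0 x1 y0 y1 : ℤ) : Set Z2 := {a | x0 ≤ a.1 ∧ a.1 ≤ x1 ∧ y0 ≤ a.2 ∧ a.2 ≤ y1}

lemma sum_abel (f V : ℕ → ℤ) (a : ℕ) (h0 : V 0 = 0) (ha : V a = 0)
    (hf : ∀ x, x + 1 < a → V (x + 1) ≠ 0 → f x = f (x + 1)) :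
    ∑ x ∈ Finset.range a, f x * (V (x + 1) - V x) = 0 := by
  have key : ∀ m, m < a → ∑ x ∈ Finset.range (m + 1), f x * (V (x + 1) - V x) = f m * V (m + 1) := by
    intro m
    induction m with
    | zero => intro _; simp [h0]
    | succ m ih =>
      intro hm
      rw [Finset.sum_range_succ, ih (by omega)]
      by_cases hV : V (m + 1) = 0
      · simp [hV]
      · rw [hf m hm hV]; ring
  cases a with
  | zero => simp
  | succ a => rw [key a (by omega), ha]; simp

open Classical in
lemma hex (O K : Set Z2) (a b : ℕ) (hO : ∀ x y : ℤ, (2 * x, 2 * y) ∈ O)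
    (hK : ∀ x y : ℤ, (2 * x + 1, 2 * y + 1) ∈ K) (hOK : ∀ z, z ∈ O ∨ z ∈ K) :
    (∃ p q : Z2, p.1 = 0 ∧ q.1 = 2 * a ∧ J (O ∩ rc 0 (2 * a) 0 (2 * b)) p q) ∨
    (∃ (x : ℤ) (q : Z2), q.2 = 2 * b + 1 ∧
      J (K ∩ rc 1 (2 * a - 1) (-1) (2 * b + 1)) (2 * x + 1, -1) q) := by
  by_contra hcon
  push Not at hcon
  obtain ⟨hno, hnk⟩ := hcon
  set OR := O ∩ rc 0 (2 * a) 0 (2 * b) with hOR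
  set KR := K ∩ rc 1 (2 * a - 1) (-1) (2 * b + 1) with hKR
  let C : ℕ → ℕ → Prop := fun x y => ∃ p : Z2, p.1 = 0 ∧ J OR p (2 * (x : ℤ), 2 * (y : ℤ))
  let S : ℕ → ℕ → Prop := fun x y => ∃ x' : ℤ, J KR (2 * x' + 1, -1) (2 * (x : ℤ) + 1, 2 * (y : ℤ) - 1)
  let χ : ℕ → ℕ → ℤ := fun x y => if C x y then 1 else 0
  let σ : ℕ → ℕ → ℤ := fun x y => if S x y then 1 else 0
  have hOmem : ∀ x y : ℕ, x ≤ a → y ≤ b → (2 * (x : ℤ), 2 * (y : ℤ)) ∈ OR := by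
    intro x y hx hy
    refine ⟨hO _ _, ?_⟩
    simp only [rc, Set.mem_ofPred_eq]; omega
  have hKmem : ∀ x y : ℕ, x < a → y ≤ b + 1 → (2 * (x : ℤ) + 1, 2 * (y : ℤ) - 1) ∈ KR := by
    intro x y hx hy
    refine ⟨?_, ?_⟩
    · have := hK x (y - 1)
      convert this using 2; ring
    · simp only [rc, Set.mem_ofPred_eq]; omega
  have hC0 : ∀ y, y ≤ b → χ 0 y = 1 := by
    intro y hy
    have : C 0 y := ⟨_, by simp, J.refl (hOmem 0 y (by omega) hy)⟩
    simp [χ, this]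
  have hCa : ∀ y, χ a y = 0 := by
    intro y
    have : ¬ C a y := by
      rintro ⟨p, hp, h⟩
      exact hno p _ hp (by simp) h
    simp [χ, this]
  have hS0 : ∀ x, x < a → σ x 0 = 1 := by
    intro x hx
    have : S x 0 := ⟨x, by simpa using J.refl (hKmem x 0 hx (by omega))⟩
    simp [σ, this]
  have hSb : ∀ x, σ x (b + 1) = 0 := by
    intro x
    have : ¬ S x (b + 1) := by
      rintro ⟨x', h⟩
      exact hnk x' _ (by push_cast; ring) h
    simp [σ, this]
  -- horizontal primal edges
  have hh : ∀ x y, x < a → y ≤ b → χ (x + 1) y ≠ χ x y → σ x y = σ x (y + 1) := by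
    intro x y hx hy hne
    have hO' : (2 * (x : ℤ) + 1, 2 * (y : ℤ)) ∉ O := by
      intro hmem
      have hmem : (2 * (x : ℤ) + 1, 2 * (y : ℤ)) ∈ OR := by
        refine ⟨hmem, ?_⟩
        simp only [rc, Set.mem_ofPred_eq]; omega
      apply hne
      have : C (x + 1) y ↔ C x y := by
        constructor
        · rintro ⟨p, hp, h⟩
          refine ⟨p, hp, (h.tail ?_ hmem).tail ?_ (hOmem x y hx.le hy)⟩ <;> apply nb_mk <;> push_cast <;> omega
        · rintro ⟨p, hp, h⟩
          refine ⟨p, hp, (h.tail ?_ hmem).tail ?_ (hOmem (x+1) y hx hy)⟩ <;> apply nb_mk <;> push_cast <;> omega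
      simp only [χ, this]
    have hmem : (2 * (x : ℤ) + 1, 2 * (y : ℤ)) ∈ KR := by
      refine ⟨(hOK _).resolve_left hO', ?_⟩
      simp only [rc, Set.mem_ofPred_eq]; omega
    have : S x y ↔ S x (y + 1) := by
      constructor
      · rintro ⟨p, h⟩
        refine ⟨p, (h.tail ?_ hmem).tail ?_ (hKmem x (y + 1) hx (by omega))⟩ <;> apply nb_mk <;> push_cast <;> omega
      · rintro ⟨p, h⟩
        refine ⟨p, (h.tail ?_ hmem).tail ?_ (hKmem x y hx (by omega))⟩ <;> apply nb_mk <;> push_cast <;> omega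
    simp only [σ, this]
  -- vertical primal edges
  have hvv : ∀ x y, x + 1 < a → y < b → χ (x + 1) y ≠ χ (x + 1) (y + 1) →
      σ x (y + 1) = σ (x + 1) (y + 1) := by
    intro x y hx hy hne
    have hO' : (2 * (x : ℤ) + 2, 2 * (y : ℤ) + 1) ∉ O := by
      intro hmem
      have hmem : (2 * (x : ℤ) + 2, 2 * (y : ℤ) + 1) ∈ OR := by
        refine ⟨hmem, ?_⟩
        simp only [rc, Set.mem_ofPred_eq]; omega
      apply hne
      have : C (x + 1) y ↔ C (x + 1) (y + 1) := by
        constructor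
        · rintro ⟨p, hp, h⟩
          refine ⟨p, hp, (h.tail ?_ hmem).tail ?_ (hOmem (x+1) (y+1) hx.le hy)⟩ <;>
            apply nb_mk <;> push_cast <;> omega
        · rintro ⟨p, hp, h⟩
          refine ⟨p, hp, (h.tail ?_ hmem).tail ?_ (hOmem (x+1) y hx.le hy.le)⟩ <;>
            apply nb_mk <;> push_cast <;> omega
      simp only [χ, this]
    have hmem : (2 * (x : ℤ) + 2, 2 * (y : ℤ) + 1) ∈ KR := by
      refine ⟨(hOK _).resolve_left hO', ?_⟩
      simp only [rc, Set.mem_ofPred_eq]; omega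
    have : S x (y + 1) ↔ S (x + 1) (y + 1) := by
      constructor
      · rintro ⟨p, h⟩
        refine ⟨p, (h.tail ?_ hmem).tail ?_ (hKmem (x+1) (y + 1) hx (by omega))⟩ <;>
          apply nb_mk <;> push_cast <;> omega
      · rintro ⟨p, h⟩
        refine ⟨p, (h.tail ?_ hmem).tail ?_ (hKmem x (y+1) (by omega) (by omega))⟩ <;>
          apply nb_mk <;> push_cast <;> omega
    simp only [σ, this]
  have hBT : ∀ y, y ≤ b → ∑ x ∈ Finset.range a, σ x y * (χ (x + 1) y - χ x y) =
      ∑ x ∈ Finset.range a, σ x (y + 1) * (χ (x + 1) y - χ x y) := by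
    intro y hy
    refine Finset.sum_congr rfl fun x hx => ?_
    by_cases hne : χ (x + 1) y = χ x y
    · simp [hne]
    · rw [hh x y (Finset.mem_range.1 hx) hy hne]
  have hTB : ∀ y, y < b → ∑ x ∈ Finset.range a, σ x (y + 1) * (χ (x + 1) y - χ x y) =
      ∑ x ∈ Finset.range a, σ x (y + 1) * (χ (x + 1) (y + 1) - χ x (y + 1)) := by
    intro y hy
    rw [← sub_eq_zero, ← Finset.sum_sub_distrib]
    have := sum_abel (fun x => σ x (y + 1)) (fun x => χ x y - χ x (y + 1)) a
      (by simp [hC0 y hy.le, hC0 (y + 1) hy]) (by simp [hCa])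
      (fun x hx hne => hvv x y hx hy (fun h => hne (by simp [h])))
    rw [← this]
    refine Finset.sum_congr rfl fun x _ => ?_
    ring
  have hB : ∀ y, y ≤ b → ∑ x ∈ Finset.range a, σ x y * (χ (x + 1) y - χ x y) = -1 := by
    intro y
    induction y with
    | zero =>
      intro _
      have : ∑ x ∈ Finset.range a, σ x 0 * (χ (x + 1) 0 - χ x 0) =
          ∑ x ∈ Finset.range a, (χ (x + 1) 0 - χ x 0) := by
        refine Finset.sum_congr rfl fun x hx => ?_
        rw [hS0 x (Finset.mem_range.1 hx), one_mul]
      rw [this, Finset.sum_range_sub (fun x => χ x 0), hC0 0 (by omega), hCa]; rfl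
    | succ y ih =>
      intro hy
      rw [← hTB y hy, ← hBT y (by omega), ih (by omega)]
  have h1 := hB b le_rfl
  rw [hBT b le_rfl] at h1
  simp [hSb] at h1
/-! ### Finite uniform probability -/

def Dep (E : Set Z2 → Prop) (F : Finset Z2) : Prop :=
  ∀ A B : Set Z2, (∀ x ∈ F, x ∈ A ↔ x ∈ B) → E A → E B

def Inc (E : Set Z2 → Prop) : Prop := ∀ A B : Set Z2, A ⊆ B → E A → E B

open Classical in
noncomputable def ev (F : Finset Z2) (E : Set Z2 → Prop) : Finset (Finset Z2) :=
  F.powerset.filter (fun B => E (B : Set Z2))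

noncomputable def pr (F : Finset Z2) (E : Set Z2 → Prop) : ℝ :=
  ((ev F E).card : ℝ) / 2 ^ F.card

lemma mem_ev {F : Finset Z2} {E : Set Z2 → Prop} {B : Finset Z2} :
    B ∈ ev F E ↔ B ⊆ F ∧ E (B : Set Z2) := by
  simp [ev]

lemma Dep.iff {E : Set Z2 → Prop} {F : Finset Z2} (h : Dep E F) {A B : Set Z2}
    (hAB : ∀ x ∈ F, x ∈ A ↔ x ∈ B) : E A ↔ E B :=
  ⟨h A B hAB, h B A (fun x hx => (hAB x hx).symm)⟩

lemma Dep.mono {E : Set Z2 → Prop} {F G : Finset Z2} (h : Dep E F) (hFG : F ⊆ G) : Dep E G :=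
  fun A B hAB => h A B (fun x hx => hAB x (hFG hx))

lemma Dep.and {E E' : Set Z2 → Prop} {F : Finset Z2} (h : Dep E F) (h' : Dep E' F) :
    Dep (fun A => E A ∧ E' A) F := fun A B hAB hE => ⟨h A B hAB hE.1, h' A B hAB hE.2⟩

lemma Dep.or {E E' : Set Z2 → Prop} {F : Finset Z2} (h : Dep E F) (h' : Dep E' F) :
    Dep (fun A => E A ∨ E' A) F := fun A B hAB hE => hE.imp (h A B hAB) (h' A B hAB)

lemma Dep.not {E : Set Z2 → Prop} {F : Finset Z2} (h : Dep E F) :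
    Dep (fun A => ¬ E A) F := fun A B hAB hE hB => hE ((h.iff hAB).2 hB)

lemma pr_nonneg (F : Finset Z2) (E : Set Z2 → Prop) : 0 ≤ pr F E := by
  unfold pr; positivity

lemma pr_true (F : Finset Z2) : pr F (fun _ => True) = 1 := by
  simp [pr, ev]

lemma pr_mono {F : Finset Z2} {E E' : Set Z2 → Prop} (h : ∀ A, E A → E' A) : pr F E ≤ pr F E' := by
  unfold pr
  gcongr
  intro B hB
  rw [mem_ev] at *
  exact ⟨hB.1, h _ hB.2⟩

lemma pr_mul {F G : Finset Z2} {E E' : Set Z2 → Prop} (hFG : Disjoint F G)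
    (hE : Dep E F) (hE' : Dep E' G) :
    pr (F ∪ G) (fun A => E A ∧ E' A) = pr F E * pr G E' := by
  have hd : ∀ x, x ∈ F → x ∈ G → False := fun x h h' => Finset.disjoint_left.1 hFG h h'
  have hcard : (ev (F ∪ G) (fun A => E A ∧ E' A)).card = (ev F E ×ˢ ev G E').card := by
    refine Finset.card_bij' (fun A _ => (A ∩ F, A ∩ G)) (fun B _ => B.1 ∪ B.2) ?_ ?_ ?_ ?_
    · intro A hA
      rw [mem_ev] at hA
      rw [Finset.mem_product, mem_ev, mem_ev]
      refine ⟨⟨Finset.inter_subset_right, hE _ _ ?_ hA.2.1⟩,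
        ⟨Finset.inter_subset_right, hE' _ _ ?_ hA.2.2⟩⟩
      · intro x hx; simp [hx]
      · intro x hx; simp [hx]
    · rintro ⟨B, C⟩ hB
      rw [Finset.mem_product, mem_ev, mem_ev] at hB
      obtain ⟨⟨h1, h2⟩, h3, h4⟩ := hB
      rw [mem_ev]
      refine ⟨Finset.union_subset_union h1 h3, hE _ _ ?_ h2, hE' _ _ ?_ h4⟩
      · intro x hx
        have : x ∉ C := fun h => hd x hx (h3 h)
        simp [this]
      · intro x hx
        have : x ∉ B := fun h => hd x (h1 h) hx
        simp [this]
    · intro A hA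
      rw [mem_ev] at hA
      simp only [← Finset.inter_union_distrib_left]
      exact Finset.inter_eq_left.2 hA.1
    · rintro ⟨B, C⟩ hB
      rw [Finset.mem_product, mem_ev, mem_ev] at hB
      obtain ⟨⟨h1, h2⟩, h3, h4⟩ := hB
      simp only at h1 h3
      ext x
      · simp only [Finset.mem_inter, Finset.mem_union]
        constructor
        · rintro ⟨h | h, h'⟩
          · exact h
          · exact (hd x h' (h3 h)).elim
        · intro h; exact ⟨Or.inl h, h1 h⟩
      · simp only [Finset.mem_inter, Finset.mem_union]
        constructor
        · rintro ⟨h | h, h'⟩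
          · exact (hd x (h1 h) h').elim
          · exact h
        · intro h; exact ⟨Or.inr h, h3 h⟩
  unfold pr
  rw [hcard, Finset.card_product, Finset.card_union_of_disjoint hFG]
  push_cast
  rw [pow_add, mul_div_mul_comm]

lemma pr_ext {F G : Finset Z2} {E : Set Z2 → Prop} (hE : Dep E F) (hFG : F ⊆ G) :
    pr G E = pr F E := by
  have h := pr_mul (F := F) (G := G \ F) (E := E) (E' := fun _ => True)
    Finset.disjoint_sdiff hE (fun _ _ _ h => h)
  rw [pr_true, mul_one, Finset.union_sdiff_of_subset hFG] at h
  rw [← h]; simp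

open Classical in
noncomputable def P (E : Set Z2 → Prop) : ℝ :=
  if h : ∃ F, Dep E F then pr (Classical.choose h) E else 0

lemma P_eq {E : Set Z2 → Prop} {F : Finset Z2} (h : Dep E F) : P E = pr F E := by
  have hex : ∃ F, Dep E F := ⟨F, h⟩
  have hs := Classical.choose_spec hex
  unfold P
  rw [dif_pos hex, ← pr_ext hs (Finset.subset_union_left (s₂ := F)),
    ← pr_ext h (Finset.subset_union_right (s₁ := Classical.choose hex))]

lemma P_nonneg (E : Set Z2 → Prop) : 0 ≤ P E := by
  unfold P; split_ifs
  · exact pr_nonneg _ _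
  · exact le_rfl

lemma P_mono {E E' : Set Z2 → Prop} {F G : Finset Z2} (hE : Dep E F) (hE' : Dep E' G)
    (h : ∀ A, E A → E' A) : P E ≤ P E' := by
  rw [P_eq (hE.mono (Finset.subset_union_left (s₂ := G))),
    P_eq (hE'.mono (Finset.subset_union_right (s₁ := F)))]
  exact pr_mono h

lemma pr_not (F : Finset Z2) (E : Set Z2 → Prop) : pr F E + pr F (fun A => ¬ E A) = 1 := by
  classical
  unfold pr
  rw [← add_div, div_eq_one_iff_eq (by positivity)]
  have := Finset.card_filter_add_card_filter_not (s := F.powerset) (fun B => E (B : Set Z2))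
  rw [Finset.card_powerset] at this
  unfold ev
  exact_mod_cast (by convert this)

lemma pr_or_le (F : Finset Z2) (E E' : Set Z2 → Prop) :
    pr F (fun A => E A ∨ E' A) ≤ pr F E + pr F E' := by
  classical
  unfold pr
  rw [← add_div]
  gcongr
  have : ev F (fun A => E A ∨ E' A) ⊆ ev F E ∪ ev F E' := by
    intro B hB
    rw [Finset.mem_union, mem_ev, mem_ev]
    rw [mem_ev] at hB
    tauto
  exact_mod_cast (Finset.card_le_card this).trans (Finset.card_union_le _ _)

lemma pr_sum_le {ι : Type*} (F : Finset Z2) (I : Finset ι) (E : ι → Set Z2 → Prop)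
    (X : Set Z2 → Prop) (hdis : ∀ d d' A, E d A → E d' A → d = d')
    (h : ∀ d ∈ I, ∀ A, E d A → X A) : ∑ d ∈ I, pr F (E d) ≤ pr F X := by
  classical
  unfold pr
  rw [← Finset.sum_div]
  gcongr
  have h1 : (I.biUnion (fun d => ev F (E d))).card = ∑ d ∈ I, (ev F (E d)).card := by
    apply Finset.card_biUnion
    intro d _ d' _ hne
    rw [Function.onFun, Finset.disjoint_left]
    intro B hB hB'
    rw [mem_ev] at hB hB'
    exact hne (hdis _ _ _ hB.2 hB'.2)
  have h2 : I.biUnion (fun d => ev F (E d)) ⊆ ev F X := by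
    intro B hB
    rw [Finset.mem_biUnion] at hB
    obtain ⟨d, hd, hB⟩ := hB
    rw [mem_ev] at *
    exact ⟨hB.1, h d hd _ hB.2⟩
  have h3 := Finset.card_le_card h2
  rw [h1] at h3
  exact_mod_cast h3

lemma pr_le_sum {ι : Type*} (F : Finset Z2) (I : Finset ι) (E : ι → Set Z2 → Prop)
    (X : Set Z2 → Prop) (h : ∀ A, X A → ∃ d ∈ I, E d A) : pr F X ≤ ∑ d ∈ I, pr F (E d) := by
  classical
  unfold pr
  rw [← Finset.sum_div]
  gcongr
  have h1 : (I.biUnion (fun d => ev F (E d))).card ≤ ∑ d ∈ I, (ev F (E d)).card :=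
    Finset.card_biUnion_le
  have h2 : ev F X ⊆ I.biUnion (fun d => ev F (E d)) := by
    intro B hB
    rw [Finset.mem_biUnion]
    rw [mem_ev] at hB
    obtain ⟨d, hd, hE⟩ := h _ hB.2
    exact ⟨d, hd, mem_ev.2 ⟨hB.1, hE⟩⟩
  exact_mod_cast (Finset.card_le_card h2).trans h1

lemma pr_fkg {F : Finset Z2} {E E' : Set Z2 → Prop} (hi : Inc E) (hi' : Inc E') :
    pr F E * pr F E' ≤ pr F (fun A => E A ∧ E' A) := by
  classical
  let em : Finset F → Finset Z2 := fun B => B.map (Function.Embedding.subtype _)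
  have hem : Function.Injective em := Finset.map_injective _
  let fam : (Set Z2 → Prop) → Finset (Finset F) := fun E => Finset.univ.filter (fun B => E (em B))
  have hcard : ∀ E, (ev F E).card = (fam E).card := by
    intro E
    rw [← Finset.card_map ⟨em, hem⟩]
    congr 1
    ext B
    rw [mem_ev, Finset.mem_map]
    constructor
    · rintro ⟨h1, h2⟩
      have : em (B.subtype (· ∈ F)) = B := by
        simp only [em]
        rw [Finset.subtype_map_of_mem]
        exact fun x hx => h1 hx
      refine ⟨B.subtype (· ∈ F), ?_, this⟩
      simp only [fam, Finset.mem_filter, Finset.mem_univ, true_and]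
      rw [this]; exact h2
    · rintro ⟨C, h1, rfl⟩
      simp only [fam, Finset.mem_filter, Finset.mem_univ, true_and] at h1
      refine ⟨?_, h1⟩
      intro x hx
      simp only [Function.Embedding.coeFn_mk, em, Finset.mem_map] at hx
      obtain ⟨y, _, rfl⟩ := hx
      exact y.2
  have hup : ∀ E, Inc E → IsUpperSet (fam E : Set (Finset F)) := by
    intro E hE B C hBC hB
    simp only [fam, Finset.coe_filter, Finset.mem_univ, true_and, Set.mem_ofPred_eq] at *
    refine hE _ _ ?_ hB
    exact_mod_cast Finset.map_subset_map.2 hBC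
  have key := (hup E hi).le_card_inter_finset (hup E' hi')
  have hinter : fam E ∩ fam E' = fam (fun A => E A ∧ E' A) := by
    ext B; simp [fam]
  rw [hinter, ← hcard E, ← hcard E', ← hcard (fun A => E A ∧ E' A), Fintype.card_coe] at key
  unfold pr
  rw [div_mul_div_comm, div_le_div_iff₀ (by positivity) (by positivity)]
  have key' : ((ev F E).card : ℝ) * (ev F E').card ≤
      2 ^ F.card * (ev F (fun A => E A ∧ E' A)).card := by exact_mod_cast key
  nlinarith [pow_pos (show (0:ℝ) < 2 by norm_num) F.card]

lemma P_fkg {F : Finset Z2} {E E' : Set Z2 → Prop} (hE : Dep E F) (hE' : Dep E' F)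
    (hi : Inc E) (hi' : Inc E') : P E * P E' ≤ P (fun A => E A ∧ E' A) := by
  rw [P_eq hE, P_eq hE', P_eq (hE.and hE')]
  exact pr_fkg hi hi'

lemma P_fkg3 {F : Finset Z2} {E E' E'' : Set Z2 → Prop} (hE : Dep E F) (hE' : Dep E' F)
    (hE'' : Dep E'' F) (hi : Inc E) (hi' : Inc E') (hi'' : Inc E'') :
    P E * P E' * P E'' ≤ P (fun A => (E A ∧ E' A) ∧ E'' A) := by
  refine le_trans ?_ (P_fkg (hE.and hE') hE''
    (fun A B h hh => ⟨hi _ _ h hh.1, hi' _ _ h hh.2⟩) hi'')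
  exact mul_le_mul_of_nonneg_right (P_fkg hE hE' hi hi') (P_nonneg _)

lemma Dep.perm {F : Finset Z2} {E : Set Z2 → Prop} (hE : Dep E F) (σ : Z2 ≃ Z2) :
    Dep (fun A => E (σ ⁻¹' A)) (F.map σ.toEmbedding) := by
  intro A B hAB h
  refine hE _ _ ?_ h
  intro x hx
  exact hAB (σ x) (by simpa using hx)

lemma P_perm {F : Finset Z2} {E : Set Z2 → Prop} (hE : Dep E F) (σ : Z2 ≃ Z2) :
    P (fun A => E (σ ⁻¹' A)) = P E := by
  rw [P_eq hE, P_eq (hE.perm σ)]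
  unfold pr
  rw [Finset.card_map]
  congr 2
  refine Finset.card_bij' (fun A _ => A.map σ.symm.toEmbedding) (fun A _ => A.map σ.toEmbedding)
    ?_ ?_ ?_ ?_
  · intro A hA
    rw [mem_ev] at *
    constructor
    · intro x hx
      rw [Finset.mem_map] at hx
      obtain ⟨y, hy, rfl⟩ := hx
      have := hA.1 hy
      rw [Finset.mem_map] at this
      obtain ⟨z, hz, rfl⟩ := this
      simpa using hz
    · convert hA.2 using 1
      ext x; simp
  · intro A hA
    rw [mem_ev] at *
    constructor
    · exact Finset.map_subset_map.2 hA.1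
    · convert hA.2 using 1
      ext x; simp
  · intro A _; ext x; simp
  · intro A _; ext x; simp

lemma Dep.flip {F : Finset Z2} {E : Set Z2 → Prop} (hE : Dep E F) :
    Dep (fun A => E Aᶜ) F := by
  intro A B hAB h
  exact hE _ _ (fun x hx => not_congr (hAB x hx)) h

lemma P_flip {F : Finset Z2} {E : Set Z2 → Prop} (hE : Dep E F) :
    P (fun A => E Aᶜ) = P E := by
  rw [P_eq hE, P_eq hE.flip]
  unfold pr
  congr 2
  refine Finset.card_bij' (fun A _ => F \ A) (fun A _ => F \ A) ?_ ?_ ?_ ?_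
  · intro A hA
    rw [mem_ev] at *
    refine ⟨Finset.sdiff_subset, hE _ _ ?_ hA.2⟩
    intro x hx; simp [hx]
  · intro A hA
    rw [mem_ev] at *
    refine ⟨Finset.sdiff_subset, hE _ _ ?_ hA.2⟩
    intro x hx; simp [hx]
  · intro A hA
    rw [mem_ev] at hA
    exact Finset.sdiff_sdiff_eq_self hA.1
  · intro A hA
    rw [mem_ev] at hA
    exact Finset.sdiff_sdiff_eq_self hA.1

lemma P_pos {F : Finset Z2} {E : Set Z2 → Prop} (hE : Dep E F) (h : E Set.univ) : 0 < P E := by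
  rw [P_eq hE]
  unfold pr
  have : F ∈ ev F E := mem_ev.2 ⟨subset_rfl, hE _ _ (fun x hx => by simp [hx]) h⟩
  have := Finset.card_pos.2 ⟨F, this⟩
  positivity
/-! ### Percolation events in the doubled lattice -/

def opn (A : Set Z2) : Set Z2 :=
  {p | (p.1 % 2 = 0 ∧ p.2 % 2 = 0) ∨ (p ∈ A ∧ (p.1 + p.2) % 2 = 1)}

lemma mem_opn {A : Set Z2} {p : Z2} :
    p ∈ opn A ↔ (p.1 % 2 = 0 ∧ p.2 % 2 = 0) ∨ (p ∈ A ∧ (p.1 + p.2) % 2 = 1) := Iff.rfl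

lemma mem_rc {x0 x1 y0 y1 : ℤ} {a : Z2} :
    a ∈ rc x0 x1 y0 y1 ↔ x0 ≤ a.1 ∧ a.1 ≤ x1 ∧ y0 ≤ a.2 ∧ a.2 ≤ y1 := Iff.rfl

noncomputable def bx (x0 x1 y0 y1 : ℤ) : Finset Z2 := Finset.Icc (x0, y0) (x1, y1)

lemma mem_bx {x0 x1 y0 y1 : ℤ} {a : Z2} : a ∈ bx x0 x1 y0 y1 ↔ a ∈ rc x0 x1 y0 y1 := by
  simp only [bx, Finset.mem_Icc, Prod.le_def, mem_rc]
  tauto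

lemma opn_congr {A B s : Set Z2} (h : ∀ x ∈ s, x ∈ A ↔ x ∈ B) : opn A ∩ s = opn B ∩ s := by
  ext x
  simp only [Set.mem_inter_iff, mem_opn]
  constructor
  · rintro ⟨h1, h2⟩; rw [h x h2] at h1; exact ⟨h1, h2⟩
  · rintro ⟨h1, h2⟩; rw [← h x h2] at h1; exact ⟨h1, h2⟩

lemma opn_mono {A B : Set Z2} (h : A ⊆ B) : opn A ⊆ opn B := by
  rintro x (hx | hx)
  · exact Or.inl hx
  · exact Or.inr ⟨h hx.1, hx.2⟩

def LR (x0 x1 y0 y1 : ℤ) (A : Set Z2) : Prop :=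
  ∃ p q : Z2, p.1 = x0 ∧ q.1 = x1 ∧ J (opn A ∩ rc x0 x1 y0 y1) p q

def BT (x0 x1 y0 y1 : ℤ) (A : Set Z2) : Prop :=
  ∃ p q : Z2, p.2 = y0 ∧ q.2 = y1 ∧ J (opn A ∩ rc x0 x1 y0 y1) p q

lemma LR_dep (x0 x1 y0 y1 : ℤ) : Dep (LR x0 x1 y0 y1) (bx x0 x1 y0 y1) := by
  rintro A B hAB ⟨p, q, hp, hq, h⟩
  rw [opn_congr (fun x hx => hAB x (mem_bx.2 hx))] at h
  exact ⟨p, q, hp, hq, h⟩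

lemma BT_dep (x0 x1 y0 y1 : ℤ) : Dep (BT x0 x1 y0 y1) (bx x0 x1 y0 y1) := by
  rintro A B hAB ⟨p, q, hp, hq, h⟩
  rw [opn_congr (fun x hx => hAB x (mem_bx.2 hx))] at h
  exact ⟨p, q, hp, hq, h⟩

lemma LR_inc (x0 x1 y0 y1 : ℤ) : Inc (LR x0 x1 y0 y1) := by
  rintro A B hAB ⟨p, q, hp, hq, h⟩
  exact ⟨p, q, hp, hq, h.mono (Set.inter_subset_inter_left _ (opn_mono hAB))⟩

lemma BT_inc (x0 x1 y0 y1 : ℤ) : Inc (BT x0 x1 y0 y1) := by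
  rintro A B hAB ⟨p, q, hp, hq, h⟩
  exact ⟨p, q, hp, hq, h.mono (Set.inter_subset_inter_left _ (opn_mono hAB))⟩

structure Good (σ : Z2 ≃ Z2) : Prop where
  nb' : ∀ a b, nb (σ a) (σ b) ↔ nb a b
  ev' : ∀ a, ((σ a).1 % 2 = 0 ∧ (σ a).2 % 2 = 0) ↔ (a.1 % 2 = 0 ∧ a.2 % 2 = 0)
  od' : ∀ a, ((σ a).1 + (σ a).2) % 2 = 1 ↔ (a.1 + a.2) % 2 = 1

lemma Good.opn {σ : Z2 ≃ Z2} (h : Good σ) (A : Set Z2) (a : Z2) :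
    a ∈ Perc.opn (σ ⁻¹' A) ↔ σ a ∈ Perc.opn A := by
  rw [mem_opn, mem_opn, h.ev', h.od']; rfl

lemma Good.J {σ : Z2 ≃ Z2} (h : Good σ) {A s t : Set Z2} (hst : ∀ a, σ a ∈ t ↔ a ∈ s) {p q : Z2} :
    Perc.J (Perc.opn (σ ⁻¹' A) ∩ s) p q ↔ Perc.J (Perc.opn A ∩ t) (σ p) (σ q) := by
  constructor
  · intro hJ
    exact hJ.map σ (fun a b hn => (h.nb' a b).2 hn)
      (fun a ha => ⟨(h.opn A a).1 ha.1, (hst a).2 ha.2⟩)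
  · intro hJ
    have := hJ.map (t := Perc.opn (σ ⁻¹' A) ∩ s) σ.symm
      (fun a b hn => (h.nb' _ _).1 (by simpa using hn))
      (fun a ha => ⟨(h.opn A _).2 (by simpa using ha.1), (hst _).1 (by simpa using ha.2)⟩)
    simpa using this

def sw : Z2 ≃ Z2 := Equiv.prodComm ℤ ℤ
lemma sw_apply (a : Z2) : sw a = (a.2, a.1) := rfl
lemma sw_good : Good sw := by
  refine ⟨?_, ?_, ?_⟩
  · rintro ⟨a1, a2⟩ ⟨b1, b2⟩; simp only [sw_apply, nb]; tauto
  · rintro ⟨a1, a2⟩; simp only [sw_apply]; tauto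
  · rintro ⟨a1, a2⟩; simp only [sw_apply]; omega

def tr (c : Z2) : Z2 ≃ Z2 := Equiv.addRight c
lemma tr_apply (c a : Z2) : tr c a = (a.1 + c.1, a.2 + c.2) := rfl
lemma tr_good (i j : ℤ) : Good (tr (2 * i, 2 * j)) := by
  refine ⟨?_, ?_, ?_⟩
  · rintro ⟨a1, a2⟩ ⟨b1, b2⟩; simp only [tr_apply, nb]; omega
  · rintro ⟨a1, a2⟩; simp only [tr_apply]; omega
  · rintro ⟨a1, a2⟩; simp only [tr_apply]; omega

def rx (c : ℤ) : Z2 ≃ Z2 := (Equiv.subLeft c).prodCongr (Equiv.refl ℤ)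
lemma rx_apply (c : ℤ) (a : Z2) : rx c a = (c - a.1, a.2) := rfl
lemma rx_good (c : ℤ) : Good (rx (2 * c)) := by
  refine ⟨?_, ?_, ?_⟩
  · rintro ⟨a1, a2⟩ ⟨b1, b2⟩; simp only [rx_apply, nb]; omega
  · rintro ⟨a1, a2⟩; simp only [rx_apply]; omega
  · rintro ⟨a1, a2⟩; simp only [rx_apply]; omega

def ry (c : ℤ) : Z2 ≃ Z2 := (Equiv.refl ℤ).prodCongr (Equiv.subLeft c)
lemma ry_apply (c : ℤ) (a : Z2) : ry c a = (a.1, c - a.2) := rfl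
lemma ry_good (c : ℤ) : Good (ry (2 * c)) := by
  refine ⟨?_, ?_, ?_⟩
  · rintro ⟨a1, a2⟩ ⟨b1, b2⟩; simp only [ry_apply, nb]; omega
  · rintro ⟨a1, a2⟩; simp only [ry_apply]; omega
  · rintro ⟨a1, a2⟩; simp only [ry_apply]; omega

lemma P_BT (x0 x1 y0 y1 : ℤ) : P (BT x0 x1 y0 y1) = P (LR y0 y1 x0 x1) := by
  rw [← P_perm (LR_dep y0 y1 x0 x1) sw]
  congr 1
  funext A
  apply propext
  have key := fun p q => sw_good.J (A := A) (s := rc y0 y1 x0 x1) (t := rc x0 x1 y0 y1) (p := p)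
    (q := q) (fun a => by simp only [sw_apply, mem_rc]; tauto)
  constructor
  · rintro ⟨p, q, hp, hq, h⟩
    exact ⟨sw p, sw q, hp, hq, (key _ _).2 h⟩
  · rintro ⟨p, q, hp, hq, h⟩
    exact ⟨sw p, sw q, hp, hq, (key _ _).1 h⟩

lemma P_LR_tr (i j x0 x1 y0 y1 : ℤ) :
    P (LR (x0 + 2 * i) (x1 + 2 * i) (y0 + 2 * j) (y1 + 2 * j)) = P (LR x0 x1 y0 y1) := by
  rw [← P_perm (LR_dep x0 x1 y0 y1) (tr (2 * i, 2 * j))]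
  congr 1
  funext A
  apply propext
  have key := fun p q => (tr_good i j).J (A := A) (s := rc x0 x1 y0 y1)
    (t := rc (x0 + 2 * i) (x1 + 2 * i) (y0 + 2 * j) (y1 + 2 * j)) (p := p)
    (q := q) (fun a => by simp only [tr_apply, mem_rc]; omega)
  constructor
  · rintro ⟨p, q, hp, hq, h⟩
    refine ⟨(tr (2 * i, 2 * j)).symm p, (tr (2 * i, 2 * j)).symm q, ?_, ?_, ?_⟩
    · have : (tr (2 * i, 2 * j) ((tr (2 * i, 2 * j)).symm p)).1 = p.1 := by simp
      rw [tr_apply] at this; simp only at this; omega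
    · have : (tr (2 * i, 2 * j) ((tr (2 * i, 2 * j)).symm q)).1 = q.1 := by simp
      rw [tr_apply] at this; simp only at this; omega
    · rw [key]; simpa using h
  · rintro ⟨p, q, hp, hq, h⟩
    exact ⟨_, _, by rw [tr_apply, hp], by rw [tr_apply, hq], (key _ _).1 h⟩

lemma half (n : ℕ) (hn : 1 ≤ n) : 1 / 2 ≤ P (LR 0 (2 * n) 0 (2 * n)) := by
  set E := BT 0 (2 * n) 0 (2 * n) with hE
  have hEd : Dep E (bx 0 (2 * n) 0 (2 * n)) := BT_dep _ _ _ _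
  let σ : Z2 ≃ Z2 := tr (-1, -1)
  have h1 : P (fun A => E (σ ⁻¹' A)ᶜ) = P (LR 0 (2 * n) 0 (2 * n)) := by
    rw [P_perm (E := fun A => E Aᶜ) hEd.flip σ, P_flip hEd, hE, P_BT]
  have hcov : ∀ A, LR 0 (2 * n) 0 (2 * n) A ∨ E (σ ⁻¹' A)ᶜ := by
    intro A
    rcases hex (opn A) (opn A)ᶜ n (n - 1)
      (fun x y => Or.inl (by simp only; omega))
      (fun x y => by rw [Set.mem_compl_iff, mem_opn]; simp only; omega)
      (fun z => Classical.em _) with ⟨p, q, hp, hq, h⟩ | ⟨x, q, hq, h⟩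
    · left
      refine ⟨p, q, hp, hq, h.mono ?_⟩
      rintro a ⟨ha, ha'⟩
      refine ⟨ha, ?_⟩
      rw [mem_rc] at *
      omega
    · right
      refine ⟨(2 * x + 1 + 1, -1 + 1), (q.1 + 1, q.2 + 1), by simp, by simp only; omega, ?_⟩
      refine h.map (fun a => (a.1 + 1, a.2 + 1)) ?_ ?_
      · rintro ⟨a1, a2⟩ ⟨b1, b2⟩ hn; simp only [nb] at *; omega
      · rintro ⟨a1, a2⟩ ⟨ha, ha'⟩
        constructor
        · rw [Set.mem_compl_iff, mem_opn] at ha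
          rw [mem_opn, Set.mem_compl_iff, Set.mem_preimage, tr_apply]
          have : (a1 + 1 + -1, a2 + 1 + -1) = (a1, a2) := by ext <;> simp
          simp only [this]
          by_cases hA : (a1, a2) ∈ A
          · simp only [hA, true_and, not_true, false_and, or_false] at *; omega
          · simp only [hA, not_false_eq_true, true_and, false_and, or_false] at *; omega
        · rw [mem_rc] at *
          simp only at *
          omega
  have hd1 := (LR_dep 0 (2 * n) 0 (2 * n))
  have hd2 := Dep.perm (E := fun A => E Aᶜ) hEd.flip σ
  set F := bx 0 (2 * n) 0 (2 * n) ∪ (bx 0 (2 * n) 0 (2 * n)).map σ.toEmbedding with hF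
  have e1 := P_eq (hd1.mono (Finset.subset_union_left : _ ⊆ F))
  have e2 := P_eq (hd2.mono (Finset.subset_union_right : _ ⊆ F))
  have h2 := pr_or_le F (LR 0 (2 * n) 0 (2 * n)) (fun A => E (σ ⁻¹' A)ᶜ)
  have h3 : pr F (fun A => LR 0 (2 * n) 0 (2 * n) A ∨ E (σ ⁻¹' A)ᶜ) = 1 := by
    rw [← pr_true F]; congr 1; funext A; simpa using hcov A
  rw [h3, ← e1, ← e2, h1] at h2
  linarith
/-! ### Exploration from below -/

def zone (n : ℤ) : Set Z2 := rc 1 (2 * n - 1) (-1) (2 * n + 1)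

def Dx (n : ℤ) (A : Set Z2) : Set Z2 :=
  {z | ∃ x : ℤ, J ((opn A)ᶜ ∩ zone n) (2 * x + 1, -1) z}

def bdry (n : ℤ) (d : Set Z2) : Set Z2 := {b | b ∈ zone n ∧ b ∉ d ∧ ∃ a ∈ d, nb a b}

def XX (n : ℤ) (A : Set Z2) : Prop :=
  ∃ p q z : Z2, p.1 = 0 ∧ q.1 = 2 * n ∧ J (opn A ∩ rc 0 (2 * n) 0 (2 * n)) p q ∧
    z.2 = 4 * n ∧ J (opn A ∩ rc 0 (4 * n) 0 (4 * n)) p z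

lemma Dx_sub {n : ℤ} {A : Set Z2} {z : Z2} (h : z ∈ Dx n A) : z ∉ opn A ∧ z ∈ zone n := by
  obtain ⟨x, h⟩ := h
  exact h.mem_right

lemma bdry_open {n : ℤ} {A : Set Z2} {b : Z2} (h : b ∈ bdry n (Dx n A)) : b ∈ opn A := by
  obtain ⟨h1, h2, a, ⟨x, ha⟩, hn⟩ := h
  by_contra hb
  exact h2 ⟨x, ha.tail hn ⟨hb, h1⟩⟩

lemma face_not_opn (A : Set Z2) (x y : ℤ) : (2 * x + 1, 2 * y + 1) ∉ opn A := by
  rw [mem_opn]; simp only; omega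

lemma face_not_opn' (A : Set Z2) (x : ℤ) : (2 * x + 1, -1) ∉ opn A := by
  rw [mem_opn]; simp only; omega

lemma opn_congr_pt {A B : Set Z2} {x : Z2} (h : x ∈ A ↔ x ∈ B) : x ∈ opn A ↔ x ∈ opn B := by
  rw [mem_opn, mem_opn, h]

lemma Dx_det {n : ℤ} {A B d : Set Z2} (hA : Dx n A = d)
    (hAB : ∀ x ∈ d ∪ bdry n d, x ∈ A ↔ x ∈ B) : Dx n B = d := by
  subst hA
  apply Set.Subset.antisymm
  · rintro z ⟨x, hz⟩
    refine hz.ind (fun z => z ∈ Dx n A) ?_ ?_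
    · exact ⟨x, J.refl ⟨face_not_opn' A x, hz.1.2⟩⟩
    · intro a b _ hM hn hb
      by_contra hcon
      have hbd : b ∈ bdry n (Dx n A) := ⟨hb.2, hcon, a, hM, hn⟩
      have := bdry_open hbd
      rw [opn_congr_pt (hAB b (Or.inr hbd))] at this
      exact hb.1 this
  · rintro z ⟨x, hz⟩
    refine ⟨x, hz.ind (fun z => J ((opn B)ᶜ ∩ zone n) (2 * x + 1, -1) z) ?_ ?_⟩
    · exact J.refl ⟨face_not_opn' B x, hz.1.2⟩
    · intro a b ha hM hn hb
      refine hM.tail hn ⟨?_, hb.2⟩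
      rw [Set.mem_compl_iff, ← opn_congr_pt (hAB b (Or.inl ⟨x, ha.tail hn hb⟩))]
      exact hb.1

lemma XX_dep (n : ℤ) (hn : 0 ≤ n) : Dep (XX n) (bx 0 (4 * n) 0 (4 * n)) := by
  rintro A B hAB ⟨p, q, z, hp, hq, h, hz, h'⟩
  rw [opn_congr (fun x hx => hAB x (mem_bx.2 hx))] at h'
  rw [opn_congr (fun x hx => hAB x (mem_bx.2 (by rw [mem_rc] at *; omega)))] at h
  exact ⟨p, q, z, hp, hq, h, hz, h'⟩

lemma XX_inc (n : ℤ) : Inc (XX n) := by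
  rintro A B hAB ⟨p, q, z, hp, hq, h, hz, h'⟩
  exact ⟨p, q, z, hp, hq, h.mono (Set.inter_subset_inter_left _ (opn_mono hAB)), hz,
    h'.mono (Set.inter_subset_inter_left _ (opn_mono hAB))⟩

def evens : Set Z2 := {p | p.1 % 2 = 0 ∧ p.2 % 2 = 0}

/-- the boundary of the explored region contains a left-right crossing -/
lemma bdry_path (n : ℕ) (A0 : Set Z2) (hd : ∀ z ∈ Dx n A0, z.2 ≠ 2 * n + 1) :
    ∃ p q : Z2, p.1 = 0 ∧ q.1 = 2 * n ∧
      J ((evens ∪ bdry n (Dx n A0)) ∩ rc 0 (2 * n) 0 (2 * n)) p q := by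
  set O := evens ∪ bdry n (Dx n A0) with hO
  have hK : ∀ x y : ℤ, ((2 * x + 1, 2 * y + 1) : Z2) ∈ Oᶜ := by
    intro x y
    rintro (h | h)
    · simp only [evens, Set.mem_ofPred_eq] at h; omega
    · exact face_not_opn A0 x y (bdry_open h)
  rcases hex O Oᶜ n n
      (fun x y => Or.inl (by simp only [evens, Set.mem_ofPred_eq]; omega))
      hK
      (fun z => Classical.em _) with h | ⟨x, q, hq, h⟩
  · exact h
  · exfalso
    refine hd q ?_ hq
    refine h.ind (fun z => z ∈ Dx n A0) ?_ ?_
    · exact ⟨x, J.refl ⟨face_not_opn' _ x, h.1.2⟩⟩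
    · intro a b _ hM hn hb
      by_contra hcon
      exact hb.1 (Or.inr ⟨hb.2, hcon, a, hM, hn⟩)

open Classical in
lemma explore_one (n : ℕ) (hn : 1 ≤ n) (A0 : Set Z2) (hd : ∀ z ∈ Dx n A0, z.2 ≠ 2 * n + 1) :
    ∃ Y : Set Z2 → Prop,
      Dep Y ((bx 0 (4 * n) 0 (4 * n)).filter (fun z => z ∉ Dx n A0 ∪ bdry n (Dx n A0))) ∧
      (∀ A, Dx n A = Dx n A0 → Y A → XX n A) ∧ P (BT 0 (4 * n) 0 (4 * n)) ≤ 2 * P Y := by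
  obtain ⟨p, q, hp, hq, hpq⟩ := bdry_path n A0 hd
  set d := Dx n A0 with hdd
  set O := evens ∪ bdry n d with hO
  set s : Set Z2 := {a | J (O ∩ rc 0 (2 * n) 0 (2 * n)) p a} with hs
  let ρ : Z2 ≃ Z2 := rx (2 * (2 * n))
  have hρ : ∀ a, ρ a = (2 * (2 * n) - a.1, a.2) := fun a => rfl
  have hρg : Good ρ := rx_good _
  have hρρ : ∀ a, ρ (ρ a) = a := by
    intro a; rw [hρ, hρ]; ext <;> simp
  set PP : Set Z2 := s ∪ ρ ⁻¹' s with hPP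
  have hsO : ∀ a ∈ s, a ∈ O ∧ a ∈ rc 0 (2 * n) 0 (2 * n) := fun a h => J.mem_right h
  have hPPr : ∀ a ∈ PP, a ∈ rc 0 (4 * n) 0 (2 * n) := by
    rintro a (ha | ha)
    · have := (hsO a ha).2
      rw [mem_rc] at *; omega
    · have := (hsO _ ha).2
      rw [mem_rc, hρ] at this
      rw [mem_rc]
      simp only at this
      omega
  have hPPs : ∀ a, a ∈ PP ↔ ρ a ∈ PP := by
    intro a
    simp only [hPP, Set.mem_union, Set.mem_preimage, hρρ]
    tauto
  -- the left-right path in PP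
  have hpath : J PP p (ρ p) := by
    have h1 : J PP p q := hpq.cluster.mono Set.subset_union_left
    have h2 : J PP (ρ p) (ρ q) := h1.map ρ (fun a b h => (hρg.nb' a b).2 h)
      (fun a ha => (hPPs a).1 ha)
    have h3 : ρ q = q := by rw [hρ]; ext <;> simp [hq]; ring
    rw [h3] at h2
    exact h1.trans h2.symm
  have hρp : (ρ p).1 = 4 * n := by rw [hρ]; simp only [hp]; ring
  have hdPP : ∀ a ∈ d, a ∉ PP := by
    intro a ha
    have h1 := Dx_sub ha
    rintro (h | h)
    · rcases (hsO a h).1 with h' | h'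
      · exact h1.1 (Or.inl h')
      · exact h'.2.1 ha
    · have h2 := (hsO _ h).2
      have h3 := h1.2
      rw [zone, mem_rc] at h3
      rw [mem_rc, hρ] at h2
      simp only at h2
      omega
  set R := rc 0 (4 * n) 0 (4 * n) with hR
  set U : Set Z2 := {v | ∃ z : Z2, z.2 = 4 * n ∧ J (R \ PP) z v} with hU
  have hUR : ∀ v ∈ U, v ∈ R ∧ v ∉ PP := fun v ⟨z, _, h⟩ => h.mem_right
  have hUd : ∀ v ∈ U, v ∉ d ∪ bdry n d := by
    intro v hv hvd
    obtain ⟨z, hz, hzv⟩ := hv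
    -- a point of `d` equal or adjacent to `v`
    have hjoin : ∃ x : ℤ, J (d ∪ R \ PP) (2 * x + 1, -1) v := by
      have hdJ : ∀ a ∈ d, ∃ x : ℤ, J (d ∪ R \ PP) (2 * x + 1, -1) a := by
        rintro a ⟨x, ha⟩
        refine ⟨x, ?_⟩
        refine ha.ind (fun a => J (d ∪ R \ PP) (2 * x + 1, -1) a) (J.refl ?_) ?_
        · exact Or.inl ⟨x, J.refl ha.1⟩
        · intro a b ha hM hn hb
          exact hM.tail hn (Or.inl ⟨x, ha.tail hn hb⟩)
      rcases hvd with h | ⟨_, _, a, ha, hn⟩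
      · exact hdJ v h
      · obtain ⟨x, hx⟩ := hdJ a ha
        exact ⟨x, hx.tail hn (Or.inr hzv.mem_right)⟩
    obtain ⟨x, hx⟩ := hjoin
    have hfull := hx.trans (hzv.mono Set.subset_union_right).symm
    obtain ⟨a, ha, ha'⟩ := sep (s := PP) (t := d ∪ R \ PP) (x0 := 0) (x1 := 4 * n)
      (fun a ha => by have := hPPr a ha; rw [mem_rc] at this; omega) hpath hp hρp
      (by
        rintro a (ha | ha)
        · have := (Dx_sub ha).2
          rw [zone, mem_rc] at this; omega
        · have := ha.1
          rw [hR, mem_rc] at this; omega) hfull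
      (fun a ha => by have := hPPr a ha; rw [mem_rc] at this; simp only; omega)
      (fun a ha => by have := hPPr a ha; rw [mem_rc] at this; omega)
    rcases ha' with h | h
    · exact hdPP a h ha
    · exact h.2 ha
  let Y : Set Z2 → Prop := fun A => ∃ z w' w : Z2, z.2 = 4 * n ∧ J (opn A ∩ U) z w' ∧ nb w' w ∧ w ∈ s
  have hYdep : Dep Y ((bx 0 (4 * n) 0 (4 * n)).filter (fun z => z ∉ d ∪ bdry n d)) := by
    rintro A B hAB ⟨z, w', w, hz, h, hn, hw⟩
    rw [opn_congr (fun x hx => hAB x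
      (Finset.mem_filter.2 ⟨mem_bx.2 (hUR x hx).1, hUd x hx⟩))] at h
    exact ⟨z, w', w, hz, h, hn, hw⟩
  refine ⟨Y, hYdep, ?_, ?_⟩
  · rintro A hA ⟨z, w', w, hz, h, hnw, hw⟩
    have hOA : O ⊆ opn A := by
      rintro a (ha | ha)
      · exact Or.inl ha
      · rw [← hA] at ha
        exact bdry_open ha
    have hS : ∀ a, J (O ∩ rc 0 (2 * n) 0 (2 * n)) p a → J (opn A ∩ rc 0 (2 * n) 0 (2 * n)) p a :=
      fun a h => h.mono (Set.inter_subset_inter_left _ hOA)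
    have hrr : rc 0 (2 * n) 0 (2 * n) ⊆ R := by
      intro a ha; rw [hR, mem_rc]; rw [mem_rc] at ha; omega
    refine ⟨p, q, z, hp, hq, hS q hpq, hz, ?_⟩
    have h1 : J (opn A ∩ R) p w := (hS w hw).mono (Set.inter_subset_inter_right _ hrr)
    have h2 : J (opn A ∩ R) z w' := h.mono (Set.inter_subset_inter_right _ (fun a ha => (hUR a ha).1))
    exact (h1.tail hnw.symm h2.mem_right).trans h2.symm
  · have hcov : ∀ A, BT 0 (4 * n) 0 (4 * n) A → Y A ∨ Y (ρ ⁻¹' A) := by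
      rintro A ⟨u, z, hu, hz, h⟩
      have hzP : z ∉ PP := by
        intro hzP
        have := hPPr z hzP
        rw [mem_rc] at this
        omega
      have hUJ : ∀ w', J ((opn A ∩ R) \ PP) z w' → J (opn A ∩ U) z w' := by
        intro w' h
        refine h.cluster.mono ?_
        intro a ha
        have ha : J ((opn A ∩ R) \ PP) z a := ha
        exact ⟨ha.mem_right.1.1, z, hz, ha.mono (fun b hb => ⟨hb.1.2, hb.2⟩)⟩
      rcases h.symm.firstHit PP hzP with h' | ⟨w', w, h', hnw, hwP, _⟩
      · exfalso
        obtain ⟨a, ha, ha'⟩ := sep (s := PP) (t := (opn A ∩ R) \ PP) (x0 := 0) (x1 := 4 * n)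
          (fun a ha => by have := hPPr a ha; rw [mem_rc] at this; omega) hpath hp hρp
          (fun a ha => by have := ha.1.2; rw [hR, mem_rc] at this; omega) h'.symm
          (fun a ha => by have := hPPr a ha; rw [mem_rc] at this; omega)
          (fun a ha => by have := hPPr a ha; rw [mem_rc] at this; omega)
        exact ha'.2 ha
      · rcases hwP with hws | hws
        · exact Or.inl ⟨z, w', w, hz, hUJ w' h', hnw, hws⟩
        · right
          have hUρ : ∀ a, ρ a ∈ U ↔ a ∈ U := by
            have one : ∀ a ∈ U, ρ a ∈ U := by
              rintro a ⟨y, hy, ha⟩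
              refine ⟨ρ y, by rw [hρ]; exact hy, ha.map ρ (fun a b h => (hρg.nb' a b).2 h) ?_⟩
              rintro b ⟨hb, hb'⟩
              refine ⟨?_, fun h => hb' ((hPPs b).2 h)⟩
              rw [hR, mem_rc] at *
              rw [hρ]; simp only; omega
            intro a
            refine ⟨fun h => ?_, one a⟩
            have := one _ h
            rwa [hρρ] at this
          have h1 := hUJ w' h'
          have h2 := hρg.J (A := A) (s := U) (t := U) hUρ (p := ρ z) (q := ρ w')
          rw [hρρ, hρρ] at h2
          exact ⟨ρ z, ρ w', ρ w, by rw [hρ]; exact hz, h2.2 h1, (hρg.nb' _ _).2 hnw, hws⟩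
    have hB := BT_dep 0 (4 * n) 0 (4 * n)
    have hY' := hYdep.perm ρ
    have hPY := P_perm hYdep ρ
    set G := ((bx 0 (4 * n) 0 (4 * n)).filter (fun z => z ∉ d ∪ bdry n d)) with hG
    set F := bx 0 (4 * n) 0 (4 * n) ∪ (G ∪ G.map ρ.toEmbedding) with hF
    rw [P_eq (hB.mono (Finset.subset_union_left : _ ⊆ F))]
    have e1 := P_eq (hYdep.mono (F := G) (G := F)
      (Finset.subset_union_left.trans Finset.subset_union_right))
    have e2 := P_eq (hY'.mono (G := F) (Finset.subset_union_right.trans Finset.subset_union_right))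
    have h1 := pr_mono (F := F) hcov
    have h2 := pr_or_le F Y (fun A => Y (ρ ⁻¹' A))
    rw [← e1, ← e2, hPY] at h2
    linarith

open Classical in
lemma explore (n : ℕ) (hn : 1 ≤ n) :
    P (LR 0 (2 * n) 0 (2 * n)) * P (BT 0 (4 * n) 0 (4 * n)) ≤ 2 * P (XX n) := by
  let zf : Finset Z2 := bx 1 (2 * n - 1) (-1) (2 * n + 1)
  let good : Finset Z2 → Prop := fun d => ∃ A0, (d : Set Z2) = Dx n A0 ∧ ∀ z ∈ Dx n A0, z.2 ≠ 2 * n + 1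
  let I : Finset (Finset Z2) := zf.powerset.filter good
  have hex : ∀ d : Finset Z2, ∃ Y : Set Z2 → Prop, good d →
      Dep Y ((bx 0 (4 * n) 0 (4 * n)).filter (fun z => z ∉ (d : Set Z2) ∪ bdry n d)) ∧
      (∀ A, Dx n A = d → Y A → XX n A) ∧ P (BT 0 (4 * n) 0 (4 * n)) ≤ 2 * P Y := by
    intro d
    by_cases hg : good d
    · obtain ⟨A0, h1, h2⟩ := id hg
      obtain ⟨Y, hY⟩ := explore_one n hn A0 h2
      rw [← h1] at hY
      refine ⟨Y, fun _ => ?_⟩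
      convert hY
    · exact ⟨fun _ => True, fun h => (hg h).elim⟩
  choose Y hY using hex
  set F : Finset Z2 := zf ∪ bx 0 (4 * n) 0 (4 * n) with hF
  let E1 : Finset Z2 → Set Z2 → Prop := fun d A => Dx n A = d
  have hprod : ∀ d ∈ I, pr F (fun A => E1 d A ∧ Y d A) = pr F (E1 d) * P (Y d) := by
    intro d hd
    rw [Finset.mem_filter, Finset.mem_powerset] at hd
    obtain ⟨hdY, -, -⟩ := hY d hd.2
    set F1 := zf.filter (fun z => z ∈ (d : Set Z2) ∪ bdry n d) with hF1
    set F2 := (bx 0 (4 * n) 0 (4 * n)).filter (fun z => z ∉ (d : Set Z2) ∪ bdry n d) with hF2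
    have hdE : Dep (E1 d) F1 := by
      intro A B hAB hA
      refine Dx_det hA ?_
      intro x hx
      refine hAB x (Finset.mem_filter.2 ⟨?_, hx⟩)
      rcases hx with h | h
      · exact hd.1 h
      · exact mem_bx.2 h.1
    have hdis : Disjoint F1 F2 := by
      rw [Finset.disjoint_left]
      intro x h1 h2
      exact (Finset.mem_filter.1 h2).2 (Finset.mem_filter.1 h1).2
    have hsub1 : F1 ⊆ F := (Finset.filter_subset _ _).trans Finset.subset_union_left
    have hsub2 : F2 ⊆ F := (Finset.filter_subset _ _).trans Finset.subset_union_right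
    have hm := pr_mul hdis hdE hdY
    have hdep : Dep (fun A => E1 d A ∧ Y d A) (F1 ∪ F2) :=
      (hdE.mono Finset.subset_union_left).and (hdY.mono Finset.subset_union_right)
    rw [pr_ext hdep (Finset.union_subset hsub1 hsub2), hm, P_eq hdY, pr_ext hdE hsub1]
  have h1 : ∑ d ∈ I, pr F (fun A => E1 d A ∧ Y d A) ≤ pr F (XX n) := by
    apply pr_sum_le
    · intro d d' A h h'
      exact_mod_cast h.1.symm.trans h'.1
    · intro d hd A hA
      rw [Finset.mem_filter] at hd
      exact (hY d hd.2).2.1 A hA.1 hA.2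
  have h2 : pr F (LR 0 (2 * n) 0 (2 * n)) ≤ ∑ d ∈ I, pr F (E1 d) := by
    apply pr_le_sum
    rintro A ⟨p, q, hp, hq, hpq⟩
    have hsub : Dx n A ⊆ (zf : Set Z2) := by
      intro z hz
      exact mem_bx.2 (Dx_sub hz).2
    have hcoe : ((zf.filter (fun z => z ∈ Dx n A) : Finset Z2) : Set Z2) = Dx n A := by
      ext z
      simp only [Finset.coe_filter, Set.mem_ofPred_eq]
      exact ⟨fun h => h.2, fun h => ⟨hsub h, h⟩⟩
    refine ⟨zf.filter (fun z => z ∈ Dx n A), ?_, hcoe.symm⟩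
    rw [Finset.mem_filter, Finset.mem_powerset]
    refine ⟨Finset.filter_subset _ _, A, hcoe, ?_⟩
    rintro z ⟨x, hz⟩ hz2
    obtain ⟨a, ha, ha'⟩ := sep (x0 := 0) (x1 := 2 * n)
      (fun a ha => by have := ha.2; rw [mem_rc] at this; omega) hpq hp hq
      (fun a ha => by have := ha.2; rw [zone, mem_rc] at this; omega) hz
      (fun a ha => by have := ha.2; rw [mem_rc] at this; simp only; omega)
      (fun a ha => by have := ha.2; rw [mem_rc] at this; omega)
    exact ha'.1 ha.1
  have hX := P_eq ((XX_dep n (by omega)).mono (Finset.subset_union_right : _ ⊆ F))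
  have hL : Dep (LR 0 (2 * n) 0 (2 * n)) F := by
    refine (LR_dep _ _ _ _).mono ?_
    intro a ha
    refine Finset.mem_union_right _ ?_
    rw [mem_bx, mem_rc] at *
    omega
  rw [P_eq hL, hX]
  calc pr F (LR 0 (2 * n) 0 (2 * n)) * P (BT 0 (4 * n) 0 (4 * n))
      ≤ (∑ d ∈ I, pr F (E1 d)) * P (BT 0 (4 * n) 0 (4 * n)) :=
        mul_le_mul_of_nonneg_right h2 (P_nonneg _)
    _ = ∑ d ∈ I, pr F (E1 d) * P (BT 0 (4 * n) 0 (4 * n)) := Finset.sum_mul _ _ _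
    _ ≤ ∑ d ∈ I, 2 * pr F (fun A => E1 d A ∧ Y d A) := by
        refine Finset.sum_le_sum fun d hd => ?_
        rw [hprod d hd]
        have := (hY d (Finset.mem_filter.1 hd).2).2.2
        nlinarith [pr_nonneg F (E1 d)]
    _ = 2 * ∑ d ∈ I, pr F (fun A => E1 d A ∧ Y d A) := (Finset.mul_sum _ _ _).symm
    _ ≤ 2 * pr F (XX n) := by linarith
/-! ### Gluing -/

lemma XX_ge (n : ℕ) (hn : 1 ≤ n) : 1 / 8 ≤ P (XX n) := by
  have h1 := explore n hn
  have h2 := half n hn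
  have h3 := half (2 * n) (by omega)
  rw [← P_BT] at h3
  have e : (2 : ℤ) * ((2 * n : ℕ) : ℤ) = 4 * n := by push_cast; ring
  rw [e] at h3
  nlinarith

def XM (n : ℤ) (A : Set Z2) : Prop := XX n (ry (2 * n) ⁻¹' A)

lemma XM_dep (n : ℤ) (hn : 0 ≤ n) : Dep (XM n) ((bx 0 (4 * n) 0 (4 * n)).map (ry (2 * n)).toEmbedding) :=
  (XX_dep n hn).perm _

lemma XM_inc (n : ℤ) : Inc (XM n) := fun _ _ h hA => XX_inc n _ _ (Set.preimage_mono h) hA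

lemma XM_spec {n : ℤ} {A : Set Z2} (h : XM n A) :
    ∃ p q z : Z2, p.1 = 0 ∧ q.1 = 2 * n ∧ J (opn A ∩ rc 0 (2 * n) 0 (2 * n)) p q ∧
    z.2 = - (2 * n) ∧ J (opn A ∩ rc 0 (4 * n) (-(2 * n)) (2 * n)) p z := by
  obtain ⟨p, q, z, hp, hq, h1, hz, h2⟩ := h
  refine ⟨ry (2 * n) p, ry (2 * n) q, ry (2 * n) z, hp, hq, ?_, ?_, ?_⟩
  · refine ((ry_good n).J ?_).1 h1
    intro a; simp only [mem_rc, ry_apply]; omega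
  · simp only [ry_apply]; omega
  · refine ((ry_good n).J ?_).1 h2
    intro a; simp only [mem_rc, ry_apply]; omega

lemma glue_rc {A : Set Z2} {x0 x1 y0 y1 : ℤ} {p q u v : Z2}
    (h : J (opn A ∩ rc x0 x1 y0 y1) p q) (hp : p.1 = x0) (hq : q.1 = x1)
    (h' : J (opn A ∩ rc x0 x1 y0 y1) u v) (hu : u.2 = y0) (hv : v.2 = y1) :
    J (opn A ∩ rc x0 x1 y0 y1) p u := by
  have := glue (x0 := x0) (x1 := x1) (fun a ha => ⟨ha.2.1, ha.2.2.1⟩) h hp hq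
    (fun a ha => ⟨ha.2.1, ha.2.2.1⟩) h' (fun a ha => hu ▸ ha.2.2.2.1) (fun a ha => hv ▸ ha.2.2.2.2)
  rwa [Set.union_self] at this

lemma J.rc_mono {A : Set Z2} {x0 x1 y0 y1 x0' x1' y0' y1' : ℤ} {p q : Z2}
    (h : J (opn A ∩ rc x0 x1 y0 y1) p q)
    (h0 : x0' ≤ x0 := by omega) (h1 : x1 ≤ x1' := by omega) (h2 : y0' ≤ y0 := by omega)
    (h3 : y1 ≤ y1' := by omega) :
    J (opn A ∩ rc x0' x1' y0' y1') p q :=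
  h.mono (Set.inter_subset_inter_right _ (fun a ha => by rw [mem_rc] at *; omega))

lemma long_one (n : ℕ) (hn : 1 ≤ n) : 1 / 128 ≤ P (LR 0 (6 * n) 0 (4 * n)) := by
  have h0 : (0 : ℤ) ≤ n := by omega
  have e := P_LR_tr n 0 (-(2 * n)) (4 * n) 0 (4 * n)
  have e1 : -(2 * (n : ℤ)) + 2 * n = 0 := by ring
  have e2 : (4 * (n : ℤ)) + 2 * n = 6 * n := by ring
  rw [e1, e2] at e
  simp only [mul_zero, add_zero] at e
  rw [e, ← P_BT]
  have a1 := XX_ge n hn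
  have a2 : P (XM n) = P (XX n) := P_perm (XX_dep n h0) _
  have a3 := half n hn
  rw [← P_BT] at a3
  set F := (bx 0 (4 * n) 0 (4 * n)) ∪ (((bx 0 (4 * n) 0 (4 * n)).map (ry (2 * n)).toEmbedding) ∪
    bx 0 (2 * n) 0 (2 * n))
  have d1 : Dep (XX n) F := (XX_dep n h0).mono Finset.subset_union_left
  have d2 : Dep (XM n) F := (XM_dep n h0).mono
    (Finset.subset_union_left.trans Finset.subset_union_right)
  have d3 : Dep (BT 0 (2 * n) 0 (2 * n)) F := (BT_dep _ _ _ _).mono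
    (Finset.subset_union_right.trans Finset.subset_union_right)
  have h := P_fkg3 d1 d2 d3 (XX_inc n) (XM_inc n) (BT_inc _ _ _ _)
  have h' : P (fun A => (XX n A ∧ XM n A) ∧ BT 0 (2 * n) 0 (2 * n) A) ≤
      P (BT 0 (4 * n) (-(2 * n)) (4 * n)) := by
    refine P_mono ((d1.and d2).and d3) (BT_dep _ _ _ _) ?_
    rintro A ⟨⟨⟨p, q, z, hp, hq, h1, hz, h2⟩, hM⟩, u, v, hu, hv, h3⟩
    obtain ⟨p', q', z', hp', hq', h1', hz', h2'⟩ := XM_spec hM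
    have g := glue_rc h1 hp hq h3 hu hv
    have g' := glue_rc h1' hp' hq' h3 hu hv
    refine ⟨z', z, hz', hz, ?_⟩
    exact h2'.rc_mono.symm.trans (g'.rc_mono.trans (g.rc_mono.symm.trans h2.rc_mono))
  rw [a2] at h
  have b1 : 1 / 64 ≤ P (XX n) * P (XX n) := by nlinarith
  have b2 : 1 / 64 * (1 / 2) ≤ P (XX n) * P (XX n) * P (BT 0 (2 * n) 0 (2 * n)) := by
    gcongr
  linarith

lemma chain (k m j : ℕ) (hk : 1 ≤ k) (hm : 2 * j + 4 * k ≤ m) (hm' : m ≤ 2 * j + 6 * k)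
    {c : ℝ} (hc0 : 0 ≤ c) (hc : c ≤ P (LR 0 m 0 (4 * k))) :
    c / 256 ≤ P (LR 0 (2 * j + 6 * k : ℕ) 0 (4 * k)) := by
  have h1 := long_one k hk
  have e := P_LR_tr j 0 0 (6 * k) 0 (4 * k)
  simp only [mul_zero, add_zero, zero_add] at e
  rw [← e] at h1
  have h2 := half (2 * k) (by omega)
  have e2 := P_LR_tr 0 j 0 (4 * k) 0 (4 * k)
  simp only [mul_zero, add_zero, zero_add] at e2
  have e3 : (2 : ℤ) * ((2 * k : ℕ) : ℤ) = 4 * k := by push_cast; ring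
  rw [e3, ← e2, ← P_BT] at h2
  set F := bx 0 (2 * j + 6 * k : ℕ) 0 (4 * k) with hF
  have d1 : Dep (LR 0 m 0 (4 * k)) F := (LR_dep _ _ _ _).mono (fun a ha => by
    rw [hF]; rw [mem_bx, mem_rc] at *; omega)
  have d2 : Dep (LR (2 * j) (6 * k + 2 * j) 0 (4 * k)) F := (LR_dep _ _ _ _).mono (fun a ha => by
    rw [hF]; rw [mem_bx, mem_rc] at *; omega)
  have d3 : Dep (BT (2 * j) (4 * k + 2 * j) 0 (4 * k)) F := (BT_dep _ _ _ _).mono (fun a ha => by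
    rw [hF]; rw [mem_bx, mem_rc] at *; omega)
  have h := P_fkg3 d1 d2 d3 (LR_inc _ _ _ _) (LR_inc _ _ _ _) (BT_inc _ _ _ _)
  have h' := P_mono ((d1.and d2).and d3) (LR_dep 0 (2 * j + 6 * k : ℕ) 0 (4 * k)) ?_
  · have b1 : c * (1 / 128) * (1 / 2) ≤ P (LR 0 m 0 (4 * k)) * P (LR (2 * j) (6 * k + 2 * j) 0 (4 * k)) *
       P (BT (2 * j) (4 * k + 2 * j) 0 (4 * k)) := by
      gcongr
      exact mul_nonneg (P_nonneg _) (P_nonneg _)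
      exact P_nonneg _
    linarith
  rintro A ⟨⟨⟨p, q, hp, hq, h1⟩, ⟨p', q', hp', hq', h1'⟩⟩, u, v, hu, hv, h3⟩
  have key : ∀ (x0 x1 : ℤ) (p q : Z2), x0 ≤ 2 * j → 4 * k + 2 * j ≤ x1 → 0 ≤ x0 →
      x1 ≤ (2 * j + 6 * k : ℕ) → p.1 = x0 → q.1 = x1 →
      J (opn A ∩ rc x0 x1 0 (4 * k)) p q → J (opn A ∩ rc 0 (2 * j + 6 * k : ℕ) 0 (4 * k)) p u := by
    intro x0 x1 p q g1 g2 g3 g4 hp hq hJ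
    exact (glue_rc hJ hp hq h3.rc_mono hu hv).rc_mono
  refine ⟨p, q', hp, by rw [hq']; push_cast; ring, ?_⟩
  have r1 := key _ _ p q (by omega) (by omega) (by omega) (by omega) hp hq h1
  have r2 := key _ _ p' q' (by omega) (by omega) (by omega) (by omega) hp' hq' h1'
  exact r1.trans (r2.symm.trans h1'.rc_mono)

lemma rsw_model : ∃ c : ℝ, 0 < c ∧ ∀ N : ℕ, 1 ≤ N →
    c ≤ P (LR (-(2 * N)) (2 * N) 0 (2 * N)) := by
  set c0 : ℝ := 1 / 128 / 256 / 256 / 256 with hc0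
  have big : ∀ N : ℕ, 2 ≤ N → c0 ≤ P (LR (-(2 * N)) (2 * N) 0 (2 * N)) := by
    intro N hN
    have e := P_LR_tr N 0 (-(2 * N)) (2 * N) 0 (2 * N)
    have e1 : -(2 * (N : ℤ)) + 2 * N = 0 := by ring
    have e2 : (2 * (N : ℤ)) + 2 * N = 4 * N := by ring
    rw [e1, e2] at e
    simp only [mul_zero, add_zero] at e
    rw [← e]
    obtain ⟨k, hk⟩ : ∃ k, N = 2 * k ∨ N = 2 * k + 1 := ⟨N / 2, by omega⟩
    have hk1 : 1 ≤ k := by omega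
    have s0 := long_one k hk1
    have s1 := chain k (6 * k) k hk1 (by omega) (by omega) (by norm_num)
      (c := 1 / 128) (by push_cast; exact s0)
    have s2 := chain k _ (k + 1) hk1 (by omega) (by omega) (by norm_num) s1
    have s3 := chain k _ (k + 2) hk1 (by omega) (by omega) (by norm_num) s2
    have mono : ∀ x : ℕ, (x : ℤ) = 4 * N → P (LR 0 x 0 (4 * k)) ≤ P (LR 0 (4 * N) 0 (2 * N)) := by
      intro x hx
      rw [← hx]
      refine P_mono (LR_dep _ _ _ _) (LR_dep _ _ _ _) ?_
      rintro A ⟨p, q, hp, hq, h⟩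
      exact ⟨p, q, hp, hq, h.rc_mono⟩
    rcases hk with hk | hk
    · refine le_trans ?_ (s1.trans (mono _ (by omega)))
      rw [hc0]; norm_num
    · refine le_trans ?_ (s3.trans (mono _ (by omega)))
      exact le_rfl
  have p1 : 0 < P (LR (-2) 2 0 2) := by
    refine P_pos (LR_dep _ _ _ _) ⟨(-2, 0), (2, 0), rfl, rfl, ?_⟩
    have hm : ∀ x : ℤ, -2 ≤ x → x ≤ 2 → ((x, 0) : Z2) ∈ opn Set.univ ∩ rc (-2) 2 0 2 := by
      intro x h1 h2
      refine ⟨?_, ?_⟩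
      · rw [mem_opn]; simp only [Set.mem_univ, true_and]; omega
      · rw [mem_rc]; simp only; omega
    have s : ∀ x : ℤ, nb (x, 0) (x + 1, 0) := fun x => by simp [nb]
    have t1 := (J.refl (hm (-2) (by norm_num) (by norm_num))).tail (s _) (hm _ (by norm_num) (by norm_num))
    have t2 := t1.tail (s _) (hm _ (by norm_num) (by norm_num))
    have t3 := t2.tail (s _) (hm _ (by norm_num) (by norm_num))
    have t4 := t3.tail (s _) (hm _ (by norm_num) (by norm_num))
    norm_num at t4
    exact t4
  refine ⟨min c0 (P (LR (-2) 2 0 2)), lt_min (by norm_num [hc0]) p1, ?_⟩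
  intro N hN
  rcases hN.eq_or_lt with h | h
  · subst h
    exact (min_le_right _ _).trans (by norm_num)
  · exact (min_le_left _ _).trans (big N h)
/-! ### Transfer to the edge configurations -/

def lo (s : Z2) : Vertex 2 := ![s.1 / 2, s.2 / 2]
def hi (s : Z2) : Vertex 2 :=
  ![s.1 / 2 + (if s.1 % 2 = 1 then 1 else 0), s.2 / 2 + (if s.1 % 2 = 1 then 0 else 1)]
def hj (s : Z2) : Vertex 2 := ![(s.1 + 1) / 2, (s.2 + 1) / 2]

lemma vext {i j k l : ℤ} (h : i = k) (h' : j = l) : (![i, j] : Vertex 2) = ![k, l] := by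
  rw [h, h']

lemma lohi (s : Z2) : adj (lo s) (hi s) := by
  unfold adj lo hi
  rw [Fin.sum_univ_two]
  simp only [Matrix.cons_val_zero, Matrix.cons_val_one]
  split_ifs <;> simp

def ed (s : Z2) : Edge 2 := ⟨s(lo s, hi s), lo s, hi s, lohi s, rfl⟩

def mid (e : Edge 2) : Z2 :=
  Sym2.lift ⟨fun x y : Vertex 2 => ((x 0 + y 0, x 1 + y 1) : Z2),
    fun x y => by ext <;> simp only <;> omega⟩ e.1

lemma mid_ed {s : Z2} (h : (s.1 + s.2) % 2 = 1) : mid (ed s) = s := by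
  have : mid (ed s) = (lo s 0 + hi s 0, lo s 1 + hi s 1) := rfl
  rw [this]
  unfold lo hi
  simp only [Matrix.cons_val_zero, Matrix.cons_val_one]
  ext
  · simp only; split_ifs <;> omega
  · simp only; split_ifs <;> omega

def Aof (ω : Config 2) : Set Z2 := {s | ω (ed s) = true}

lemma hi_eq {s : Z2} (h : (s.1 + s.2) % 2 = 1) : hi s = hj s := by
  unfold hi hj
  apply vext <;> split_ifs <;> omega

lemma step_lo {ω : Config 2} {s : Z2} (h : s ∈ Aof ω) : step ω (lo s) (hi s) := ⟨lohi s, h⟩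

lemma step_hi {ω : Config 2} {s : Z2} (h : s ∈ Aof ω) : step ω (hi s) (lo s) := by
  have h1 := lohi s
  have h2 : adj (hi s) (lo s) := by
    unfold adj at *
    rw [← h1]
    refine Finset.sum_congr rfl fun i _ => ?_
    omega
  refine ⟨h2, ?_⟩
  have : (⟨s(hi s, lo s), hi s, lo s, h2, rfl⟩ : Edge 2) = ed s := Subtype.ext Sym2.eq_swap
  rw [this]
  exact h

lemma lo_rect {N : ℕ} {a : Z2} (h : a ∈ rc (-(2 * N)) (2 * N) 0 (2 * N)) : lo a ∈ rect N := by
  rw [mem_rc] at h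
  refine ⟨?_, ?_, ?_, ?_⟩ <;> simp only [lo, Matrix.cons_val_zero, Matrix.cons_val_one] <;> omega

lemma hj_rect {N : ℕ} {a : Z2} (h : a ∈ rc (-(2 * N)) (2 * N) 0 (2 * N)) : hj a ∈ rect N := by
  rw [mem_rc] at h
  refine ⟨?_, ?_, ?_, ?_⟩ <;> simp only [hj, Matrix.cons_val_zero, Matrix.cons_val_one] <;> omega

lemma conn_both {ω : Config 2} {N : ℕ} {x : Vertex 2} {b : Z2}
    (hb : b ∈ opn (Aof ω) ∩ rc (-(2 * N)) (2 * N) 0 (2 * N))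
    (h : ConnWithin ω (rect N) x (lo b) ∨ ConnWithin ω (rect N) x (hj b)) :
    ConnWithin ω (rect N) x (lo b) ∧ ConnWithin ω (rect N) x (hj b) := by
  have r1 := lo_rect hb.2
  have r2 := hj_rect hb.2
  rcases mem_opn.1 hb.1 with he | ⟨hA, ho⟩
  · have : hj b = lo b := by
      unfold hj lo; apply vext <;> omega
    rw [this] at h ⊢
    exact ⟨h.elim id id, h.elim id id⟩
  · have s1 := step_lo hA
    have s2 := step_hi hA
    rw [hi_eq ho] at s1 s2
    rcases h with h | h
    · exact ⟨h, h.1, h.2.tail ⟨s1, r1, r2⟩⟩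
    · exact ⟨⟨h.1, h.2.tail ⟨s2, r2, r1⟩⟩, h⟩

lemma LR_cross {ω : Config 2} {N : ℕ} (h : LR (-(2 * N)) (2 * N) 0 (2 * N) (Aof ω)) :
    ω ∈ HorizontalCrossing N := by
  obtain ⟨p, q, hp, hq, hJ⟩ := h
  have key : ConnWithin ω (rect N) (lo p) (lo q) ∧ ConnWithin ω (rect N) (lo p) (hj q) := by
    refine hJ.ind (fun a => ConnWithin ω (rect N) (lo p) (lo a) ∧ ConnWithin ω (rect N) (lo p) (hj a))
      ?_ ?_
    · exact conn_both hJ.1 (Or.inl ⟨lo_rect hJ.1.2, .refl⟩)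
    · intro a b ha hM hn hb
      refine conn_both hb ?_
      have ha' := mem_opn.1 ha.mem_right.1
      have hb' := mem_opn.1 hb.1
      have : (lo a = lo b ∨ lo a = hj b) ∨ (hj a = lo b ∨ hj a = hj b) := by
        have hcase : (a.1 / 2 = b.1 / 2 ∧ a.2 / 2 = b.2 / 2) ∨
            (a.1 / 2 = (b.1 + 1) / 2 ∧ a.2 / 2 = (b.2 + 1) / 2) ∨
            ((a.1 + 1) / 2 = b.1 / 2 ∧ (a.2 + 1) / 2 = b.2 / 2) ∨
            ((a.1 + 1) / 2 = (b.1 + 1) / 2 ∧ (a.2 + 1) / 2 = (b.2 + 1) / 2) := by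
          have ha'' : (a.1 % 2 = 0 ∧ a.2 % 2 = 0) ∨ (a.1 + a.2) % 2 = 1 := ha'.imp id And.right
          have hb'' : (b.1 % 2 = 0 ∧ b.2 % 2 = 0) ∨ (b.1 + b.2) % 2 = 1 := hb'.imp id And.right
          unfold nb at hn
          clear ha' hb' hM ha hb hJ hp hq
          omega
        rcases hcase with h | h | h | h
        · exact Or.inl (Or.inl (vext h.1 h.2))
        · exact Or.inl (Or.inr (vext h.1 h.2))
        · exact Or.inr (Or.inl (vext h.1 h.2))
        · exact Or.inr (Or.inr (vext h.1 h.2))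
      rcases this with (h | h) | (h | h)
      · left; rw [← h]; exact hM.1
      · right; rw [← h]; exact hM.1
      · left; rw [← h]; exact hM.2
      · right; rw [← h]; exact hM.2
  refine ⟨lo p, lo q, ?_, ?_, key.1⟩
  · simp only [lo, Matrix.cons_val_zero]; omega
  · simp only [lo, Matrix.cons_val_zero]; omega

open Classical in
lemma transfer {μ : Measure (Config 2)} (hμ : IsBernoulli 2 (1 / 2) μ) {E : Set Z2 → Prop}
    {F : Finset Z2} (hE : Dep E F) (hF : ∀ s ∈ F, (s.1 + s.2) % 2 = 1) {H : Set (Config 2)}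
    (hH : ∀ ω, E (Aof ω) → ω ∈ H) : ENNReal.ofReal (P E) ≤ μ H := by
  let S : Finset (Edge 2) := F.image ed
  let C : Finset Z2 → Set (Config 2) := fun B => {ω | ∀ e ∈ S, ω e = decide (mid e ∈ B)}
  have hinj : Set.InjOn ed (F : Set Z2) := by
    intro a ha b hb h
    rw [← mid_ed (hF a ha), ← mid_ed (hF b hb), h]
  have hSc : S.card = F.card := Finset.card_image_of_injOn hinj
  have hC : ∀ B, μ (C B) = ENNReal.ofReal ((1 / 2) ^ F.card) := by
    intro B
    have := hμ.2 S (fun e => decide (mid e ∈ B))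
    refine this.trans ?_
    congr 1
    rw [← hSc, ← Finset.prod_const]
    refine Finset.prod_congr rfl fun e _ => ?_
    split_ifs <;> norm_num
  have hCs : ∀ B ω, ω ∈ C B → ∀ s ∈ F, (s ∈ Aof ω ↔ s ∈ B) := by
    intro B ω hω s hs
    have := hω (ed s) (Finset.mem_image_of_mem _ hs)
    rw [mid_ed (hF s hs)] at this
    change ω (ed s) = true ↔ _
    rw [this, decide_eq_true_iff]
  have hmeas : ∀ B, MeasurableSet (C B) := by
    intro B
    have : C B = ⋂ e ∈ S, (fun ω : Config 2 => ω e) ⁻¹' {decide (mid e ∈ B)} := by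
      ext ω; simp [C]
    rw [this]
    exact Finset.measurableSet_biInter _ fun e _ => measurable_pi_apply e (MeasurableSet.singleton _)
  have hdis : Set.PairwiseDisjoint (↑(ev F E)) C := by
    intro B hB B' hB' hne
    rw [Function.onFun, Set.disjoint_left]
    intro ω h h'
    apply hne
    have h1 := (mem_ev.1 hB).1
    have h2 := (mem_ev.1 hB').1
    ext s
    constructor
    · intro hs; exact (hCs B' ω h' s (h1 hs)).1 ((hCs B ω h s (h1 hs)).2 hs)
    · intro hs; exact (hCs B ω h s (h2 hs)).1 ((hCs B' ω h' s (h2 hs)).2 hs)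
  have hU : μ (⋃ B ∈ ev F E, C B) = ∑ B ∈ ev F E, μ (C B) :=
    measure_biUnion_finset hdis (fun B _ => hmeas B)
  have hsub : (⋃ B ∈ ev F E, C B) ⊆ H := by
    intro ω hω
    simp only [Set.mem_iUnion] at hω
    obtain ⟨B, hB, hω⟩ := hω
    exact hH ω (hE _ _ (fun s hs => (hCs B ω hω s hs).symm) (mem_ev.1 hB).2)
  refine le_trans (le_of_eq ?_) (measure_mono hsub)
  rw [hU, Finset.sum_congr rfl (fun B _ => hC B), Finset.sum_const, P_eq hE, nsmul_eq_mul]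
  unfold pr
  rw [div_eq_mul_inv, ENNReal.ofReal_mul (by positivity), ENNReal.ofReal_natCast]
  congr 2
  rw [one_div, inv_pow]

lemma LR_dep' (x0 x1 y0 y1 : ℤ) : Dep (LR x0 x1 y0 y1)
    ((bx x0 x1 y0 y1).filter (fun s => (s.1 + s.2) % 2 = 1)) := by
  rintro A B hAB ⟨p, q, hp, hq, h⟩
  refine ⟨p, q, hp, hq, h.mono ?_⟩
  rintro x ⟨hx, hr⟩
  refine ⟨?_, hr⟩
  rcases mem_opn.1 hx with h | h
  · exact Or.inl h
  · exact Or.inr ⟨(hAB x (Finset.mem_filter.2 ⟨mem_bx.2 hr, h.2⟩)).1 h.1, h.2⟩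

/-- RSW estimate for critical Bernoulli percolation on `ℤ²`: there exists `c > 0` such
that for all `n ≥ 1`, `ℙ_{1/2}[[−n,n] × [0,n] is crossed horizontally] ≥ c`. -/
theorem rsw_crossing
    (μ : Measure (Config 2)) (hμ : IsBernoulli 2 (1 / 2) μ) :
    ∃ c : ℝ, 0 < c ∧ ∀ n : ℕ, 1 ≤ n →
      ENNReal.ofReal c ≤ μ (HorizontalCrossing n) := by
  obtain ⟨c, hc, h⟩ := rsw_model
  refine ⟨c, hc, fun n hn => ?_⟩
  refine le_trans (ENNReal.ofReal_le_ofReal (h n hn)) ?_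
  exact transfer hμ (LR_dep' _ _ _ _) (fun s hs => (Finset.mem_filter.1 hs).2)
    (fun ω hω => LR_cross hω)
end Perc
end

section
/- Russo-type formula for FK-percolation: for every finite graph G = (V,E), every boundary set B ⊆ V and boundary condition ξ (a partition of B), every q ≥ 1 and every increasing event A ⊆ {0,1}^E, the map p ↦ φ^ξ_{G,p,q}[A] is differentiable on (0,1) and for every p ∈ (0,1) its derivative equals (1/(p(1−p))) · Σ_{e∈E} ( φ^ξ_{G,p,q}[A ∩ {ω(e) = 1}] − φ^ξ_{G,p,q}[A] · φ^ξ_{G,p,q}[ω(e) = 1] ). -/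
namespace FK

/-- An event `A ⊆ {0,1}^E` is increasing if it is stable under opening edges. -/
def Increasing {E : Type*} (A : Set (E → Bool)) : Prop :=
  ∀ ⦃ω ω' : E → Bool⦄, (∀ e, ω e ≤ ω' e) → ω ∈ A → ω' ∈ A

variable {V Eg : Type*}

/-- Two vertices are related in one step if they are joined by an open edge, or if they
lie in a common class of the boundary condition `ξ`. -/
def fkStep [DecidableEq V] (ends : Eg → Sym2 V) {B : Finset V} (ξ : Finpartition B)
    (ω : Eg → Bool) (x y : V) : Prop :=
  (∃ e : Eg, ω e = true ∧ ends e = s(x, y)) ∨ ∃ t ∈ ξ.parts, x ∈ t ∧ y ∈ t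

/-- `k(ω^ξ)`: the number of connected components of the spanning subgraph of open edges
after identifying, for each class of `ξ`, all vertices of that class (isolated vertices
count as components). -/
noncomputable def numComp [DecidableEq V] (ends : Eg → Sym2 V) {B : Finset V}
    (ξ : Finpartition B) (ω : Eg → Bool) : ℕ :=
  Set.ncard {C : Set V | ∃ x, C = {y | Relation.EqvGen (fkStep ends ξ ω) x y}}

/-- The FK weight `p^{|ω|} (1−p)^{|E∖ω|} q^{k(ω^ξ)}` of a configuration `ω`. -/
noncomputable def fkWeight [DecidableEq V] [Fintype Eg] (ends : Eg → Sym2 V)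
    {B : Finset V} (ξ : Finpartition B) (p q : ℝ) (ω : Eg → Bool) : ℝ :=
  p ^ (Finset.univ.filter fun e : Eg => ω e = true).card *
    (1 - p) ^ (Finset.univ.filter fun e : Eg => ω e = false).card *
    q ^ numComp ends ξ ω

/-- `φ^ξ_{G,p,q}[A]`: the FK-percolation probability of the event `A`. -/
noncomputable def fkProb [DecidableEq V] [Fintype Eg] [DecidableEq Eg]
    (ends : Eg → Sym2 V) {B : Finset V} (ξ : Finpartition B) (p q : ℝ)
    (A : Set (Eg → Bool)) : ℝ :=
  (∑ ω : Eg → Bool, A.indicator (fkWeight ends ξ p q) ω) /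
    ∑ ω : Eg → Bool, fkWeight ends ξ p q ω

lemma hasDerivAt_fkWeight [DecidableEq V] [Fintype Eg] (ends : Eg → Sym2 V)
    {B : Finset V} (ξ : Finpartition B) (p q : ℝ) (hp0 : p ≠ 0) (hp1 : 1 - p ≠ 0)
    (ω : Eg → Bool) :
    HasDerivAt (fun r : ℝ => fkWeight ends ξ r q ω)
      ((∑ e : Eg, ({ω | ω e = true} : Set (Eg → Bool)).indicator (fkWeight ends ξ p q) ω
        - Fintype.card Eg * p * fkWeight ends ξ p q ω) / (p * (1 - p))) p := by
  have hs : ∑ e : Eg, ({ω | ω e = true} : Set (Eg → Bool)).indicator (fkWeight ends ξ p q) ω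
      = ((Finset.univ.filter fun e : Eg => ω e = true).card : ℝ) * fkWeight ends ξ p q ω := by
    simp only [Set.indicator_apply, Set.mem_ofPred_eq]
    rw [← Finset.sum_filter, Finset.sum_const, nsmul_eq_mul]
  have hc : (Fintype.card Eg : ℝ) = ((Finset.univ.filter fun e : Eg => ω e = true).card : ℝ)
      + ((Finset.univ.filter fun e : Eg => ω e = false).card : ℝ) := by
    have := Finset.card_filter_add_card_filter_not (s := (Finset.univ : Finset Eg))
      (fun e : Eg => ω e = true)
    simp only [Bool.not_eq_true, Finset.card_univ] at this
    exact_mod_cast this.symm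
  rw [hs, hc]
  unfold fkWeight
  generalize (Finset.univ.filter fun e : Eg => ω e = true).card = a
  generalize (Finset.univ.filter fun e : Eg => ω e = false).card = b
  have h1 : HasDerivAt (fun r : ℝ => r ^ a) (a * p ^ a / p) p := by
    refine HasDerivAt.congr_deriv (hasDerivAt_pow a p) ?_
    rcases a with _ | a
    · simp
    · field_simp
      simp [pow_succ]
  have h2 : HasDerivAt (fun r : ℝ => (1 - r) ^ b) (- (b * (1 - p) ^ b / (1 - p))) p := by
    refine HasDerivAt.congr_deriv (((hasDerivAt_id p).const_sub 1).fun_pow b) ?_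
    rcases b with _ | b
    · simp
    · field_simp
      simp [pow_succ]
  refine HasDerivAt.congr_deriv ((h1.mul h2).mul_const (q ^ numComp ends ξ ω)) ?_
  field_simp
  ring

lemma hasDerivAt_sum_indicator [DecidableEq V] [Fintype Eg] [DecidableEq Eg]
    (ends : Eg → Sym2 V)
    {B : Finset V} (ξ : Finpartition B) (p q : ℝ) (hp0 : p ≠ 0) (hp1 : 1 - p ≠ 0)
    (A : Set (Eg → Bool)) :
    HasDerivAt (fun r : ℝ => ∑ ω : Eg → Bool, A.indicator (fkWeight ends ξ r q) ω)
      ((∑ e : Eg, ∑ ω : Eg → Bool, (A ∩ {ω | ω e = true}).indicator (fkWeight ends ξ p q) ω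
        - Fintype.card Eg * p * ∑ ω : Eg → Bool, A.indicator (fkWeight ends ξ p q) ω)
        / (p * (1 - p))) p := by
  rw [Finset.sum_comm, Finset.mul_sum, ← Finset.sum_sub_distrib, Finset.sum_div]
  apply HasDerivAt.fun_sum
  intro ω _
  by_cases h : ω ∈ A
  · have := hasDerivAt_fkWeight ends ξ p q hp0 hp1 ω
    have h3 : ∀ e : Eg, (A ∩ {ω | ω e = true}).indicator (fkWeight ends ξ p q) ω
        = ({ω | ω e = true} : Set (Eg → Bool)).indicator (fkWeight ends ξ p q) ω := by
      intro e
      rw [← Set.indicator_indicator, Set.indicator_of_mem h]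
    simpa only [h3, Set.indicator_of_mem h] using this
  · have h3 : ∀ e : Eg, (A ∩ {ω | ω e = true}).indicator (fkWeight ends ξ p q) ω = 0 := by
      intro e
      rw [← Set.indicator_indicator, Set.indicator_of_notMem h]
    simpa [h3, Set.indicator_of_notMem h] using hasDerivAt_const p (0 : ℝ)

/-- Russo-type formula for FK-percolation: for every increasing event `A`, the map
`p ↦ φ^ξ_{G,p,q}[A]` is differentiable on `(0,1)` with derivative
`(1/(p(1−p))) · Σ_{e∈E} (φ^ξ_{G,p,q}[A ∩ {ω(e)=1}] − φ^ξ_{G,p,q}[A]·φ^ξ_{G,p,q}[ω(e)=1])`. -/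
theorem fk_russo_formula [Fintype V] [DecidableEq V] [Fintype Eg] [DecidableEq Eg]
    (ends : Eg → Sym2 V) (B : Finset V) (ξ : Finpartition B)
    (q : ℝ) (hq : 1 ≤ q)
    (A : Set (Eg → Bool)) (hA : Increasing A)
    (p : ℝ) (hp : p ∈ Set.Ioo (0 : ℝ) 1) :
    HasDerivAt (fun r : ℝ => fkProb ends ξ r q A)
      ((1 / (p * (1 - p))) *
        ∑ e : Eg,
          (fkProb ends ξ p q (A ∩ {ω | ω e = true}) -
            fkProb ends ξ p q A * fkProb ends ξ p q {ω | ω e = true})) p := by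
  have hp0 : p ≠ 0 := hp.1.ne'
  have hp1 : 1 - p ≠ 0 := (sub_pos.2 hp.2).ne'
  have hZ : ∑ ω : Eg → Bool, fkWeight ends ξ p q ω ≠ 0 := by
    apply ne_of_gt
    apply Finset.sum_pos _ Finset.univ_nonempty
    intro ω _
    have := hp.1
    have := sub_pos.2 hp.2
    have : 0 < q := by linarith
    unfold fkWeight
    positivity
  have hF := hasDerivAt_sum_indicator ends ξ p q hp0 hp1 A
  have hU := hasDerivAt_sum_indicator ends ξ p q hp0 hp1 Set.univ
  simp only [Set.indicator_univ, Set.univ_inter] at hU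
  unfold fkProb
  refine HasDerivAt.congr_deriv (hF.fun_div hU hZ) ?_
  rw [Finset.sum_sub_distrib, ← Finset.mul_sum, ← Finset.sum_div, ← Finset.sum_div]
  field_simp
  ring
end FK
end
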